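/- arXiv:1912.03398 — 3 statements merged into one kernel-verified Lean document; each statement's English description precedes it below -/
import Mathlib

section
/- For every positive integer m, the quotient group G_m = U/N_m is a solvable group (of order 1024 m^2). -/
/-- The defining relators of the group `U` on generators `a, b, c` (indexed `0, 1, 2`):
`a^4, b^4, c^4, (ab)^2, (bc)^2, (abc)^2, (a^2b^2)^4, a^2c^2b^2(ac)^2, [a,c⁻¹]b^2`,
where `[x,y] = x⁻¹y⁻¹xy`. -/
def Urels : Set (FreeGroup (Fin 3)) :=
  {(FreeGroup.of 0) ^ 4, (FreeGroup.of 1) ^ 4, (FreeGroup.of 2) ^ 4,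
   (FreeGroup.of 0 * FreeGroup.of 1) ^ 2,
   (FreeGroup.of 1 * FreeGroup.of 2) ^ 2,
   (FreeGroup.of 0 * FreeGroup.of 1 * FreeGroup.of 2) ^ 2,
   ((FreeGroup.of 0) ^ 2 * (FreeGroup.of 1) ^ 2) ^ 4,
   (FreeGroup.of 0) ^ 2 * (FreeGroup.of 2) ^ 2 * (FreeGroup.of 1) ^ 2 *
     (FreeGroup.of 0 * FreeGroup.of 2) ^ 2,
   (FreeGroup.of 0)⁻¹ * FreeGroup.of 2 * FreeGroup.of 0 * (FreeGroup.of 2)⁻¹ *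
     (FreeGroup.of 1) ^ 2}

/-- The finitely presented group `U`. -/
abbrev UGroup : Type := PresentedGroup Urels

/-- The generator `a` of `U`. -/
def Ua : UGroup := PresentedGroup.of 0

/-- The generator `b` of `U`. -/
def Ub : UGroup := PresentedGroup.of 1

/-- The generator `c` of `U`. -/
def Uc : UGroup := PresentedGroup.of 2

/-- The element `x = (ac⁻¹)^4` of `U`. -/
def Ux : UGroup := (Ua * Uc⁻¹) ^ 4

/-- The element `y = (c⁻¹a)^4` of `U`. -/
def Uy : UGroup := (Uc⁻¹ * Ua) ^ 4

/-- The subgroup `N_m = ⟨x^m, y^m⟩` of `U`. -/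
def UN (m : ℕ) : Subgroup UGroup := Subgroup.closure {Ux ^ m, Uy ^ m}

/-!
The normal closure `K` of `a²` is generated by the conjugates `sᵢ = b⁻ⁱ a² bⁱ`. The relations of `U`
bound it by `D₄ × C₂`, and a permutation representation of `U` in which `K` acts freely shows that
`K` has all `16` elements. The quotient `U / K` is the plane crystallographic group
`p4m = ℤ² ⋊ D₄`. Hence `U` is solvable. Moreover `x` and `y` commute, and they map to the
translations by `(-2, 2)` and `(2, 2)`, so `N_m` meets `K` trivially and its image has index
`2 (2m)²` in the lattice `ℤ²`. The order of `G_m` is therefore `2 (2m)² · 8 · 16`.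
-/

open Subgroup DihedralGroup Multiplicative

section Generators

variable {G H N : Type*} [Group G] [Group H] [Group N]

/-- The conclusion is the compatibility needed to map out of `N ⋊[φ] G`. -/
theorem equivariant_of_closure_eq_top {φ : G →* MulAut N} {f : N →* H} {g : G →* H} {S : Set G}
    (hS : Subgroup.closure S = ⊤) (h : ∀ s ∈ S, ∀ n, f (φ s n) = g s * f n * (g s)⁻¹) (s : G)
    (n : N) : f (φ s n) = g s * f n * (g s)⁻¹ := by
  have hs : s ∈ Subgroup.closure S := hS ▸ mem_top s
  induction hs using closure_induction generalizing n with
  | mem s hs => exact h s hs n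
  | one => simp
  | mul s t _ _ hs ht => simp [hs, ht, mul_assoc]
  | inv s _ hs =>
    have h : f n = g s * f ((φ s)⁻¹ n) * (g s)⁻¹ := by simpa using hs ((φ s)⁻¹ n)
    simp [h, mul_assoc]

theorem commute_of_closure_eq_top {f : G →* H} {g : N →* H} {S : Set G} {T : Set N}
    (hS : Subgroup.closure S = ⊤) (hT : Subgroup.closure T = ⊤)
    (h : ∀ s ∈ S, ∀ t ∈ T, Commute (f s) (g t)) (x : G) (y : N) : Commute (f x) (g y) := by
  have hx : x ∈ Subgroup.closure S := hS ▸ mem_top x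
  have hy : y ∈ Subgroup.closure T := hT ▸ mem_top y
  have hf (s : G) (hs : s ∈ S) : Commute (f s) (g y) := by
    induction hy using closure_induction with
    | mem t ht => exact h s hs t ht
    | one => simp
    | mul t u _ _ ht hu => simpa using ht.mul_right hu
    | inv t _ ht => simpa using ht
  induction hx using closure_induction with
  | mem s hs => exact hf s hs
  | one => simp
  | mul s u _ _ hs hu => simpa using hs.mul_left hu
  | inv s _ hs => simpa using hs

/-- Only one inclusion has to be checked, the subgroup being finite. -/
theorem mem_normalizer_closure_of_finite {S : Set G} [Finite (Subgroup.closure S)] {g : G}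
    (h : ∀ s ∈ S, g * s * g⁻¹ ∈ Subgroup.closure S) :
    g ∈ normalizer (Subgroup.closure S : Set G) := by
  have hle : Subgroup.closure S ≤ (Subgroup.closure S).comap (MulAut.conj g).toMonoidHom :=
    (Subgroup.closure_le _).2 fun s hs => by simpa using h s hs
  have : Finite ((Subgroup.closure S : Subgroup G) : Set G) := ‹_›
  exact mem_normalizer_fintype fun n hn => by simpa using hle hn

end Generators

section Index

variable {G H N : Type*} [Group G] [Group H] [Group N]

theorem index_eq_of_disjoint_ker {f : G →* H} (hf : Function.Surjective f) {M : Subgroup G}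
    [M.Normal] (hM : Disjoint M f.ker) : M.index = (M.map f).index * Nat.card f.ker := by
  rw [index_map, f.range_eq_top_of_surjective hf, index_top, mul_one, mul_comm,
    ← relIndex_mul_index (le_sup_left : M ≤ M ⊔ f.ker), relIndex_sup_left, ← inf_relIndex_right,
    hM.eq_bot, relIndex_bot_left]

theorem index_map_inl {φ : G →* MulAut N} (M : Subgroup N) :
    (M.map (SemidirectProduct.inl : N →* N ⋊[φ] G)).index = M.index * Nat.card G := by
  rw [Subgroup.index_map, (MonoidHom.ker_eq_bot_iff _).2 SemidirectProduct.inl_injective,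
    sup_bot_eq, SemidirectProduct.range_inl_eq_ker_rightHom, index_ker,
    MonoidHom.range_eq_top_of_surjective _ SemidirectProduct.rightHom_surjective, card_top]

theorem isSolvable_semidirect {φ : G →* MulAut N} [Group.IsSolvable N] [Group.IsSolvable G] :
    Group.IsSolvable (N ⋊[φ] G) :=
  Group.isSolvable_of_ker_le_range SemidirectProduct.inl SemidirectProduct.rightHom
    SemidirectProduct.range_inl_eq_ker_rightHom.ge

end Index

section Dihedral

variable {G : Type*} [Group G] {n : ℕ}

/-- The homomorphism out of the cyclic group of order `n` which sends the generator to `g`. -/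
def zmodPowersHom (n : ℕ) (g : G) (hg : g ^ n = 1) : Multiplicative (ZMod n) →* G :=
  AddMonoidHom.toMultiplicativeLeft (ZMod.lift n ⟨zmultiplesHom _ (Additive.ofMul g), by
    simpa [← ofMul_pow] using hg⟩)

theorem zmodPowersHom_intCast (g : G) (hg : g ^ n = 1) (k : ℤ) :
    zmodPowersHom n g hg (.ofAdd k) = g ^ k := by
  simp [zmodPowersHom]

theorem zmodPowersHom_one (g : G) (hg : g ^ n = 1) :
    zmodPowersHom n g hg (.ofAdd 1) = g := by
  simpa using zmodPowersHom_intCast g hg 1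

theorem closure_ofAdd_one : Subgroup.closure {ofAdd (1 : ZMod n)} = (⊤ : Subgroup _) := by
  rw [eq_top_iff]
  rintro x -
  obtain ⟨k, hk⟩ := ZMod.intCast_surjective x.toAdd
  rw [mem_closure_singleton]
  exact ⟨k, by simp [← ofAdd_zsmul, hk]⟩

theorem sr_zero_mul_r (i : ZMod n) : sr 0 * r i = sr i := by simp

theorem closure_r_one_sr_zero :
    Subgroup.closure {r 1, sr 0} = (⊤ : Subgroup (DihedralGroup n)) := by
  have hr (i : ZMod n) : r i ∈ Subgroup.closure {r 1, sr (0 : ZMod n)} := by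
    obtain ⟨k, rfl⟩ := ZMod.intCast_surjective i
    rw [← r_one_zpow]
    exact zpow_mem (Subgroup.subset_closure <| by simp) k
  rw [eq_top_iff]
  rintro (i | i) -
  · exact hr i
  · exact sr_zero_mul_r i ▸ mul_mem (Subgroup.subset_closure <| by simp) (hr i)

/-- The homomorphism out of the dihedral group of order `2n` which sends the rotation `r 1` to `ρ`
and the reflection `sr 0` to `σ`. -/
def dihedralLift (ρ σ : G) (hρ : ρ ^ n = 1) (hσ : σ ^ 2 = 1) (hσρ : (σ * ρ) ^ 2 = 1) :
    DihedralGroup n →* G :=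
  have hσ' : σ * σ = 1 := by rwa [← sq]
  have comm (i : ZMod n) : zmodPowersHom n ρ hρ (.ofAdd i) * σ =
      σ * zmodPowersHom n ρ hρ (.ofAdd (-i)) := by
    obtain ⟨k, rfl⟩ := ZMod.intCast_surjective i
    have h : SemiconjBy σ ρ⁻¹ ρ := by
      rw [SemiconjBy, eq_comm, eq_mul_inv_iff_mul_eq]
      calc ρ * σ * ρ = σ⁻¹ * (σ * ρ) ^ 2 := by rw [sq]; group
        _ = σ := by rw [hσρ, mul_one, inv_eq_of_mul_eq_one_left hσ']
    rw [← Int.cast_neg, zmodPowersHom_intCast, zmodPowersHom_intCast]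
    simpa using (h.zpow_right k).symm
  MonoidHom.mk' (fun
    | .r i => zmodPowersHom n ρ hρ (.ofAdd i)
    | .sr i => σ * zmodPowersHom n ρ hρ (.ofAdd i)) <| by
    rintro (i | i) (j | j)
    · simp
    · simp [← mul_assoc, comm, sub_eq_neg_add]
    · simp [mul_assoc]
    · simp only [sr_mul_sr, mul_assoc]
      rw [← mul_assoc _ σ, comm, mul_assoc, ← mul_assoc σ, hσ', one_mul, ← map_mul, ← ofAdd_add,
        sub_eq_neg_add]

theorem dihedralLift_r_one (ρ σ : G) (hρ : ρ ^ n = 1) (hσ : σ ^ 2 = 1) (hσρ : (σ * ρ) ^ 2 = 1) :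
    dihedralLift ρ σ hρ hσ hσρ (r 1) = ρ :=
  zmodPowersHom_one ρ hρ

theorem dihedralLift_sr_zero (ρ σ : G) (hρ : ρ ^ n = 1) (hσ : σ ^ 2 = 1) (hσρ : (σ * ρ) ^ 2 = 1) :
    dihedralLift ρ σ hρ hσ hσρ (sr 0) = σ := by
  simp [dihedralLift]

end Dihedral

section Lattice

/-- The free abelian group `ℤ²`, written multiplicatively. -/
abbrev IntSq : Type := Multiplicative ℤ × Multiplicative ℤ

/-- The homomorphism out of `ℤ²` given by two commuting elements `x` and `y`. -/
def intSqLift {G : Type*} [Group G] (x y : G) (h : Commute x y) : IntSq →* G :=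
  (zpowersHom G x).noncommCoprod (zpowersHom G y) fun _ _ => h.zpow_zpow _ _

theorem intSqLift_apply {G : Type*} [Group G] {x y : G} (h : Commute x y) (v : IntSq) :
    intSqLift x y h v = x ^ toAdd v.1 * y ^ toAdd v.2 := rfl

theorem index_closure_diagonals (n : ℕ) :
    (Subgroup.closure {(ofAdd (-n : ℤ), ofAdd (n : ℤ)), (ofAdd (n : ℤ), ofAdd (n : ℤ))} :
      Subgroup IntSq).index = 2 * n ^ 2 := by
  let f : IntSq →* Multiplicative (ZMod n) × Multiplicative (ZMod (2 * n)) :=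
    ((Int.castAddHom (ZMod n)).toMultiplicative.comp (.fst _ _)).prod
      ((Int.castAddHom (ZMod (2 * n))).toMultiplicative.comp (.fst _ _ * .snd _ _))
  have hf : Function.Surjective f := by
    rintro ⟨p, q⟩
    obtain ⟨i, hi⟩ := ZMod.intCast_surjective (toAdd p)
    obtain ⟨j, hj⟩ := ZMod.intCast_surjective (toAdd q)
    refine ⟨(ofAdd i, ofAdd (j - i)), ?_⟩
    simp [f, hi, hj]
  have hker : f.ker =
      Subgroup.closure {(ofAdd (-n : ℤ), ofAdd (n : ℤ)), (ofAdd (n : ℤ), ofAdd (n : ℤ))} := by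
    ext ⟨i, j⟩
    have hmem : (i, j) ∈ f.ker ↔ (n : ℤ) ∣ toAdd i ∧ (2 * n : ℤ) ∣ toAdd i + toAdd j := by
      have hsum := ZMod.intCast_zmod_eq_zero_iff_dvd (toAdd i + toAdd j) (2 * n)
      push_cast at hsum
      simp [f, ← hsum, -ofAdd_add, ← ZMod.intCast_zmod_eq_zero_iff_dvd, Prod.ext_iff]
    simp only [hmem, mem_closure_pair, Prod.pow_mk, Prod.mk_mul_mk, Prod.mk.injEq]
    constructor
    · rintro ⟨⟨u, hu⟩, v, hv⟩
      refine ⟨v - u, v, ?_, ?_⟩ <;> apply toAdd.injective <;> simp <;> linarith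
    · rintro ⟨u, v, rfl, rfl⟩
      exact ⟨⟨v - u, by simp; ring⟩, v, by simp; ring⟩
  rw [← hker, index_ker, f.range_eq_top_of_surjective hf, card_top, Nat.card_prod]
  simp only [Nat.card_congr toAdd, Nat.card_zmod]
  ring

end Lattice

section Kernel

/-- The relations of `U`, imposed on a triple of elements of a group `G`. -/
structure IsUTriple {G : Type*} [Group G] (a b c : G) : Prop where
  a_pow : a ^ 4 = 1
  b_pow : b ^ 4 = 1
  c_pow : c ^ 4 = 1
  ab_sq : (a * b) ^ 2 = 1
  bc_sq : (b * c) ^ 2 = 1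
  abc_sq : (a * b * c) ^ 2 = 1
  sq_mul_sq_pow : (a ^ 2 * b ^ 2) ^ 4 = 1
  mul_ac_sq : a ^ 2 * c ^ 2 * b ^ 2 * (a * c) ^ 2 = 1
  comm_mul_sq : a⁻¹ * c * a * c⁻¹ * b ^ 2 = 1

/-- The conjugate `b⁻ⁱ a² bⁱ` of the square of `a`. -/
def conjSq {G : Type*} [Group G] (a b : G) (i : ℤ) : G := b ^ (-i) * a ^ 2 * b ^ i

theorem map_conjSq {G H : Type*} [Group G] [Group H] (f : G →* H) (a b : G) (i : ℤ) :
    f (conjSq a b i) = conjSq (f a) (f b) i := by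
  simp [conjSq]

/-- The group `D₄ × C₂` of order `16`, a model of the normal closure of `a²` in `U`. In it
`(sr 0, 1)`, `(sr 1, 1)` and `(sr 0, ofAdd 1)` play the parts of `s₀`, `s₁` and `s₂`, where
`sᵢ = b⁻ⁱ a² bⁱ`. -/
abbrev KModel : Type := DihedralGroup 4 × Multiplicative (ZMod 2)

theorem KModel.closure_eq_top :
    Subgroup.closure {((sr 0, 1) : KModel), (sr 1, 1), (sr 0, ofAdd 1)} = ⊤ := by
  have h : ∀ k : KModel, ∃ i : Fin 2, ∃ j : Fin 4, ∃ l : Fin 2,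
      k = (sr 0, 1) ^ (i : ℕ) * ((sr 0, 1) * (sr 1, 1)) ^ (j : ℕ) *
        ((sr 0, 1) * (sr 0, ofAdd 1)) ^ (l : ℕ) := by decide
  rw [eq_top_iff]
  rintro k -
  obtain ⟨i, j, l, rfl⟩ := h k
  have mem {t : KModel} (ht : t ∈ ({(sr 0, 1), (sr 1, 1), (sr 0, ofAdd 1)} : Set KModel)) :=
    Subgroup.subset_closure ht
  exact mul_mem (mul_mem (pow_mem (mem <| by simp) _)
    (pow_mem (mul_mem (mem <| by simp) (mem <| by simp)) _))
    (pow_mem (mul_mem (mem <| by simp) (mem <| by simp)) _)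

namespace IsUTriple

variable {G : Type*} [Group G] {a b c : G}

local notation "s" => conjSq a b

theorem conjSq_zero : s 0 = a ^ 2 := by simp [conjSq]

theorem zpow_neg_mul_conjSq_mul_zpow (i j : ℤ) : b ^ (-j) * s i * b ^ j = s (i + j) := by
  simp only [conjSq]; group

theorem inv_mul_conjSq_mul (i : ℤ) : b⁻¹ * s i * b = s (i + 1) := by
  simpa using zpow_neg_mul_conjSq_mul_zpow (a := a) (b := b) i 1

theorem a_inv_mul_conjSq_zero_mul_a : a⁻¹ * s 0 * a = s 0 := by
  rw [conjSq_zero]; group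

variable (h : IsUTriple a b c)
include h

theorem conjSq_mul_self (i : ℤ) : s i * s i = 1 := by
  calc s i * s i = b ^ (-i) * a ^ 4 * b ^ i := by simp only [conjSq]; group
    _ = 1 := by simp [h.a_pow]

theorem conjSq_inv (i : ℤ) : (s i)⁻¹ = s i := inv_eq_of_mul_eq_one_left (h.conjSq_mul_self i)

theorem b_zpow_add_four (i : ℤ) : b ^ (i + 4) = b ^ i := by
  rw [zpow_add, show b ^ (4 : ℤ) = 1 from mod_cast h.b_pow, mul_one]

theorem conjSq_add_four (i : ℤ) : s (i + 4) = s i := by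
  simp only [conjSq, zpow_neg, h.b_zpow_add_four]

theorem a_sq_inv : (a ^ 2)⁻¹ = a ^ 2 := inv_eq_of_mul_eq_one_left (by rw [← pow_add, h.a_pow])

theorem b_sq_inv : (b ^ 2)⁻¹ = b ^ 2 := inv_eq_of_mul_eq_one_left (by rw [← pow_add, h.b_pow])

theorem c_sq_inv : (c ^ 2)⁻¹ = c ^ 2 := inv_eq_of_mul_eq_one_left (by rw [← pow_add, h.c_pow])

theorem a_inv_mul_b_mul_a : a⁻¹ * b * a = a ^ 2 * b⁻¹ := by
  calc a⁻¹ * b * a = (a ^ 2)⁻¹ * (a * b) ^ 2 * b⁻¹ := by rw [sq (a * b)]; group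
    _ = a ^ 2 * b⁻¹ := by rw [h.ab_sq, mul_one, h.a_sq_inv]

theorem a_inv_mul_c_mul_a : a⁻¹ * c * a = b ^ 2 * c := by
  calc a⁻¹ * c * a = (a⁻¹ * c * a * c⁻¹ * b ^ 2) * (b ^ 2)⁻¹ * c := by group
    _ = b ^ 2 * c := by rw [h.comm_mul_sq, one_mul, h.b_sq_inv]

theorem conjSq_mul_conjSq_mul_conjSq_mul_conjSq (i : ℤ) :
    s i * s (i + 1) * s (i + 2) * s (i + 3) = 1 := by
  calc s i * s (i + 1) * s (i + 2) * s (i + 3)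
      = b ^ (-i) * ((a ^ 2 * b⁻¹) ^ 4 * b ^ 4) * b ^ i := by
        simp only [conjSq, pow_succ _ 3, pow_succ _ 2, sq (a ^ 2 * b⁻¹)]; group
    _ = 1 := by
      rw [← h.a_inv_mul_b_mul_a, show (a⁻¹ * b * a) ^ 4 = a⁻¹ * b ^ 4 * a by
        simpa using conj_pow (a := a⁻¹) (b := b) (i := 4), h.b_pow]
      simp

theorem conjSq_mul_conjSq_mul_conjSq (i : ℤ) : s i * s (i + 1) * s (i + 2) = s (i + 3) := by
  rw [← h.conjSq_inv (i + 3), ← mul_eq_one_iff_eq_inv, h.conjSq_mul_conjSq_mul_conjSq_mul_conjSq]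

theorem conjSq_mul_conjSq_add_two (i : ℤ) :
    s i * s (i + 2) = b ^ (-i) * (a ^ 2 * b ^ 2) ^ 2 * b ^ i := by
  calc s i * s (i + 2) = b ^ (-i) * (a ^ 2 * (b ^ 2)⁻¹ * a ^ 2 * b ^ 2) * b ^ i := by
        simp only [conjSq]; group
    _ = b ^ (-i) * (a ^ 2 * b ^ 2) ^ 2 * b ^ i := by
        rw [h.b_sq_inv, sq (a ^ 2 * b ^ 2), mul_assoc (a ^ 2 * b ^ 2)]

theorem commute_conjSq_add_two (i : ℤ) : Commute (s i) (s (i + 2)) := by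
  have hsq : (s i * s (i + 2)) * (s i * s (i + 2)) = 1 := by
    calc (s i * s (i + 2)) * (s i * s (i + 2)) = b ^ (-i) * (a ^ 2 * b ^ 2) ^ 4 * b ^ i := by
          rw [h.conjSq_mul_conjSq_add_two]; group
      _ = 1 := by simp [h.sq_mul_sq_pow]
  rw [mul_eq_one_iff_eq_inv, mul_inv_rev, h.conjSq_inv, h.conjSq_inv] at hsq
  exact hsq

theorem commute_conjSq_mul_conjSq_add_two (i : ℤ) : Commute (s i * s (i + 2)) (s (i + 1)) := by
  have h3 := h.conjSq_mul_conjSq_mul_conjSq i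
  have h3' : s (i + 2) * s (i + 1) * s i = s (i + 3) := by
    rw [← h.conjSq_inv (i + 3), ← h3]; simp [h.conjSq_inv, mul_assoc]
  calc s i * s (i + 2) * s (i + 1) = s i * (s (i + 2) * s (i + 1) * s i) * s i := by
        simp [mul_assoc, h.conjSq_mul_self]
    _ = s i * (s i * s (i + 1) * s (i + 2)) * s i := by rw [h3', h3]
    _ = s (i + 1) * (s (i + 2) * s i) := by
        rw [← mul_assoc, ← mul_assoc, h.conjSq_mul_self, one_mul, mul_assoc]
    _ = s (i + 1) * (s i * s (i + 2)) := by rw [(h.commute_conjSq_add_two i).eq]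

theorem conjSq_mul_conjSq_pow (i : ℤ) : (s i * s (i + 1)) ^ 4 = 1 := by
  have hcomm : Commute (s (i + 1)) (s i * s (i + 1) * s i) := by
    have h3 : s (i + 1 + 2) = s i * s (i + 1) * s i * (s i * s (i + 2)) := by
      rw [show i + 1 + 2 = i + 3 by ring, ← h.conjSq_mul_conjSq_mul_conjSq]
      simp [mul_assoc, ← mul_assoc (s i) (s i), h.conjSq_mul_self]
    have hp := (h.commute_conjSq_mul_conjSq_add_two i).symm
    have := (h.commute_conjSq_add_two (i + 1)).mul_right hp.inv_right
    rwa [h3, mul_inv_cancel_right] at this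
  calc (s i * s (i + 1)) ^ 4
      = s i * (s (i + 1) * (s i * s (i + 1) * s i)) * (s (i + 1) * s i * s (i + 1)) := by
        rw [pow_succ, pow_succ, sq]; simp only [mul_assoc]
    _ = (s i * s i) * (s (i + 1) * (s i * (s (i + 1) * s (i + 1)) * s i)) * s (i + 1) := by
        rw [hcomm.eq]; simp only [mul_assoc]
    _ = 1 := by simp [h.conjSq_mul_self]

theorem c_mul_conjSq_zero_mul_c_inv : c * s 0 * c⁻¹ = s 1 := by
  have hc : (a ^ 2)⁻¹ * c * a ^ 2 = a ^ 2 * s 1 * c := by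
    calc (a ^ 2)⁻¹ * c * a ^ 2 = a⁻¹ * (a⁻¹ * c * a) * a := by rw [sq]; group
      _ = a⁻¹ * (b ^ 2 * c) * a := by rw [h.a_inv_mul_c_mul_a]
      _ = (a⁻¹ * b * a) * (a⁻¹ * b * a) * (a⁻¹ * c * a) := by rw [sq]; group
      _ = a ^ 2 * s 1 * c := by
        rw [h.a_inv_mul_b_mul_a, h.a_inv_mul_c_mul_a, conjSq]; group
  rw [h.a_sq_inv, mul_assoc, mul_assoc, mul_right_inj] at hc
  rw [conjSq_zero, hc, mul_inv_cancel_right]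

theorem c_sq_mul_conjSq_zero_mul_c_sq_inv : c ^ 2 * s 0 * (c ^ 2)⁻¹ = s 2 := by
  have hac : (a * c) ^ 2 = a ^ 2 * b ^ 2 * c ^ 2 := by
    calc (a * c) ^ 2 = a * a * (a⁻¹ * c * a) * c := by rw [sq]; group
      _ = a ^ 2 * b ^ 2 * c ^ 2 := by rw [h.a_inv_mul_c_mul_a]; simp only [sq, mul_assoc]
  have hrel : a ^ 2 * b ^ 2 * c ^ 2 = b ^ 2 * c ^ 2 * a ^ 2 := by
    have h8 := h.mul_ac_sq
    rw [hac, mul_eq_one_iff_inv_eq] at h8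
    simp [← h8, h.a_sq_inv, h.b_sq_inv, h.c_sq_inv, mul_assoc]
  calc c ^ 2 * s 0 * (c ^ 2)⁻¹ = (b ^ 2)⁻¹ * (b ^ 2 * c ^ 2 * a ^ 2) * (c ^ 2)⁻¹ := by
        rw [conjSq_zero]; group
    _ = s 2 := by rw [← hrel, conjSq]; group

theorem c_mul_conjSq_one_mul_c_inv : c * s 1 * c⁻¹ = s 2 := by
  rw [← h.c_mul_conjSq_zero_mul_c_inv, ← h.c_sq_mul_conjSq_zero_mul_c_sq_inv, sq]; group

theorem a_inv_mul_conjSq_one_mul_a : a⁻¹ * s 1 * a = s (-1) := by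
  calc a⁻¹ * s 1 * a = (a⁻¹ * b * a)⁻¹ * a ^ 2 * (a⁻¹ * b * a) := by rw [conjSq]; group
    _ = s (-1) := by rw [h.a_inv_mul_b_mul_a, conjSq]; group

theorem a_inv_mul_conjSq_neg_one_mul_a : a⁻¹ * s (-1) * a = s 0 * s 1 * s 0 := by
  calc a⁻¹ * s (-1) * a = (a⁻¹ * b * a) * a ^ 2 * (a⁻¹ * b * a)⁻¹ := by rw [conjSq]; group
    _ = s 0 * s 1 * (a ^ 2)⁻¹ := by rw [h.a_inv_mul_b_mul_a, conjSq, conjSq]; group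
    _ = s 0 * s 1 * s 0 := by rw [h.a_sq_inv, conjSq_zero]

theorem conjSq_two : s 2 = s (-1) * s 0 * s 1 := by
  simpa using (h.conjSq_mul_conjSq_mul_conjSq (-1)).symm

theorem conjSq_neg_one : s (-1) = s 0 * s 1 * s 2 := by
  simpa [← h.conjSq_add_four (-1)] using (h.conjSq_mul_conjSq_mul_conjSq 0).symm

theorem a_inv_mul_conjSq_two_mul_a : a⁻¹ * s 2 * a = s 0 * s 1 * s (-1) := by
  calc a⁻¹ * s 2 * a = (a⁻¹ * s (-1) * a) * (a⁻¹ * s 0 * a) * (a⁻¹ * s 1 * a) := by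
        rw [h.conjSq_two]; group
    _ = s 0 * s 1 * s (-1) := by
        rw [h.a_inv_mul_conjSq_neg_one_mul_a, a_inv_mul_conjSq_zero_mul_a,
          h.a_inv_mul_conjSq_one_mul_a, mul_assoc (s 0 * s 1), h.conjSq_mul_self, mul_one]

theorem c_mul_conjSq_neg_one_mul_c_inv : c * s (-1) * c⁻¹ = s 2 * s (-1) * s 1 := by
  calc c * s (-1) * c⁻¹
      = (b ^ 2)⁻¹ * ((b ^ 2 * c) * s (-1) * (b ^ 2 * c)⁻¹) * b ^ 2 := by group
    _ = (b ^ 2)⁻¹ * (a⁻¹ * (c * s 1 * c⁻¹) * a) * b ^ 2 := by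
        rw [← h.a_inv_mul_c_mul_a, ← h.a_inv_mul_conjSq_one_mul_a]; group
    _ = (b ^ (-2 : ℤ) * s 0 * b ^ (2 : ℤ)) * (b ^ (-2 : ℤ) * s 1 * b ^ (2 : ℤ)) *
          (b ^ (-2 : ℤ) * s (-1) * b ^ (2 : ℤ)) := by
        rw [h.c_mul_conjSq_one_mul_c_inv, h.a_inv_mul_conjSq_two_mul_a]; group
    _ = s 2 * s (-1) * s 1 := by
        simp only [zpow_neg_mul_conjSq_mul_zpow]
        rw [show s (-1) = s (1 + 2) from (h.conjSq_add_four (-1)).symm]; rfl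

theorem c_mul_conjSq_two_mul_c_inv : c * s 2 * c⁻¹ = s 2 * s (-1) * s 2 := by
  calc c * s 2 * c⁻¹ = (c * s (-1) * c⁻¹) * (c * s 0 * c⁻¹) * (c * s 1 * c⁻¹) := by
        rw [h.conjSq_two]; group
    _ = s 2 * s (-1) * s 2 := by
        rw [h.c_mul_conjSq_neg_one_mul_c_inv, h.c_mul_conjSq_zero_mul_c_inv,
          h.c_mul_conjSq_one_mul_c_inv, mul_assoc (s 2 * s (-1)), h.conjSq_mul_self, mul_one]

theorem range_conjSq : Set.range s = {s (-1), s 0, s 1, s 2} := by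
  refine Set.Subset.antisymm ?_ (by simp [Set.insert_subset_iff])
  rintro _ ⟨i, rfl⟩
  have hper : Function.Periodic s 4 := h.conjSq_add_four
  obtain ⟨j, ⟨hj₁, hj₂⟩, hij⟩ := hper.exists_mem_Ico (by norm_num) i (-1)
  rw [hij]
  interval_cases j <;> simp

theorem commute_conjSq_mul_conjSq : Commute (s 0 * s 1) (s 0 * s 2) :=
  .mul_left ((Commute.refl _).mul_right (h.commute_conjSq_add_two 0))
    (h.commute_conjSq_mul_conjSq_add_two 0).symm

theorem conjSq_mul_conjSq_add_two_pow (i : ℤ) : (s i * s (i + 2)) ^ 2 = 1 := by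
  rw [(h.commute_conjSq_add_two i).mul_pow, sq, sq, h.conjSq_mul_self, h.conjSq_mul_self, one_mul]

/-- The homomorphism from `D₄ × C₂` given by the rotation `s₀s₁`, the reflection `s₀` and the
central involution `s₀s₂`, where `sᵢ = b⁻ⁱ a² bⁱ`. -/
def kernelHom : KModel →* G :=
  (dihedralLift (s 0 * s 1) (s 0) (h.conjSq_mul_conjSq_pow 0) (by rw [sq, h.conjSq_mul_self])
    (by rw [← mul_assoc, h.conjSq_mul_self, one_mul, sq, h.conjSq_mul_self])).noncommCoprod
  (zmodPowersHom 2 (s 0 * s 2) (h.conjSq_mul_conjSq_add_two_pow 0))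
  (commute_of_closure_eq_top closure_r_one_sr_zero closure_ofAdd_one <| by
    simpa [zmodPowersHom_one, dihedralLift_r_one, dihedralLift_sr_zero] using
      ⟨h.commute_conjSq_mul_conjSq, (Commute.refl _).mul_right (h.commute_conjSq_add_two 0)⟩)

theorem kernelHom_sr_zero : h.kernelHom (sr 0, 1) = s 0 := by
  simp [kernelHom, dihedralLift_sr_zero]

theorem kernelHom_sr_one : h.kernelHom (sr 1, 1) = s 1 := by
  simp [kernelHom, ← sr_zero_mul_r 1, dihedralLift_sr_zero, dihedralLift_r_one, ← mul_assoc,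
    h.conjSq_mul_self, -sr_mul_r]

theorem kernelHom_sr_zero_ofAdd_one : h.kernelHom (sr 0, ofAdd 1) = s 2 := by
  simp [kernelHom, dihedralLift_sr_zero, zmodPowersHom_one, ← mul_assoc, h.conjSq_mul_self]

theorem range_kernelHom : h.kernelHom.range = Subgroup.closure (Set.range s) := by
  rw [MonoidHom.range_eq_map, ← KModel.closure_eq_top, MonoidHom.map_closure]
  simp only [Set.image_insert_eq, Set.image_singleton, kernelHom_sr_zero, kernelHom_sr_one,
    kernelHom_sr_zero_ofAdd_one]
  apply le_antisymm
  · apply Subgroup.closure_mono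
    simp [Set.insert_subset_iff]
  · have h0 : s 0 ∈ Subgroup.closure {s 0, s 1, s 2} := Subgroup.subset_closure <| by simp
    have h1 : s 1 ∈ Subgroup.closure {s 0, s 1, s 2} := Subgroup.subset_closure <| by simp
    have h2 : s 2 ∈ Subgroup.closure {s 0, s 1, s 2} := Subgroup.subset_closure <| by simp
    have h3 : s (-1) ∈ Subgroup.closure {s 0, s 1, s 2} :=
      h.conjSq_neg_one ▸ mul_mem (mul_mem h0 h1) h2
    simp [h.range_conjSq, Subgroup.closure_le, Set.insert_subset_iff, h3]

theorem normal_range_kernelHom (hgen : Subgroup.closure {a, b, c} = ⊤) :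
    h.kernelHom.range.Normal := by
  have : Finite (Subgroup.closure (Set.range s)) := h.range_kernelHom ▸ Set.finite_range h.kernelHom
  have hs (i : ℤ) : s i ∈ Subgroup.closure (Set.range s) := Subgroup.subset_closure ⟨i, rfl⟩
  rw [h.range_kernelHom, ← normalizer_eq_top_iff, eq_top_iff, ← hgen, Subgroup.closure_le]
  have ha : a⁻¹ ∈ normalizer (Subgroup.closure (Set.range s) : Set G) := by
    apply mem_normalizer_closure_of_finite
    simp only [h.range_conjSq, Set.mem_insert_iff, Set.mem_singleton_iff, forall_eq_or_imp,
      forall_eq, inv_inv]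
    rw [← h.range_conjSq, h.a_inv_mul_conjSq_neg_one_mul_a, a_inv_mul_conjSq_zero_mul_a,
      h.a_inv_mul_conjSq_one_mul_a, h.a_inv_mul_conjSq_two_mul_a]
    simp [mul_mem, hs]
  have hb : b⁻¹ ∈ normalizer (Subgroup.closure (Set.range s) : Set G) := by
    apply mem_normalizer_closure_of_finite
    rintro _ ⟨i, rfl⟩
    simpa [inv_mul_conjSq_mul] using hs _
  have hc : c ∈ normalizer (Subgroup.closure (Set.range s) : Set G) := by
    apply mem_normalizer_closure_of_finite
    simp only [h.range_conjSq, Set.mem_insert_iff, Set.mem_singleton_iff, forall_eq_or_imp,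
      forall_eq]
    rw [← h.range_conjSq, h.c_mul_conjSq_neg_one_mul_c_inv, h.c_mul_conjSq_zero_mul_c_inv,
      h.c_mul_conjSq_one_mul_c_inv, h.c_mul_conjSq_two_mul_c_inv]
    simp [mul_mem, hs]
  simpa [Set.insert_subset_iff] using ⟨inv_mem_iff.1 ha, inv_mem_iff.1 hb, hc⟩

theorem map {H : Type*} [Group H] (f : G →* H) : IsUTriple (f a) (f b) (f c) := by
  constructor <;>
    simp only [← map_mul, ← map_pow, ← map_inv, h.a_pow, h.b_pow, h.c_pow, h.ab_sq, h.bc_sq,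
      h.abc_sq, h.sq_mul_sq_pow, h.mul_ac_sq, h.comm_mul_sq, map_one]

end IsUTriple

end Kernel

namespace UGroup

theorem closure_generators : Subgroup.closure {Ua, Ub, Uc} = ⊤ := by
  have h : Set.range (PresentedGroup.of : Fin 3 → UGroup) = {Ua, Ub, Uc} := by
    ext g
    simp [Fin.exists_fin_succ, Ua, Ub, Uc, eq_comm]
  rw [← h, PresentedGroup.closure_range_of]

theorem isUTriple : IsUTriple Ua Ub Uc := by
  constructor
  all_goals exact PresentedGroup.one_of_mem (rels := Urels) (by simp [Urels])

variable {G : Type*} [Group G] {a b c : G}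

/-- The homomorphism out of `U` given by a triple satisfying the relations of `U`. -/
def lift (h : IsUTriple a b c) : UGroup →* G :=
  PresentedGroup.toGroup (f := ![a, b, c]) <| by
    simpa [Urels] using
      ⟨h.a_pow, h.b_pow, h.c_pow, h.ab_sq, h.bc_sq, h.abc_sq, h.sq_mul_sq_pow, h.mul_ac_sq,
        h.comm_mul_sq⟩

theorem lift_a (h : IsUTriple a b c) : lift h Ua = a := PresentedGroup.toGroup.of _

theorem lift_b (h : IsUTriple a b c) : lift h Ub = b := PresentedGroup.toGroup.of _

theorem lift_c (h : IsUTriple a b c) : lift h Uc = c := PresentedGroup.toGroup.of _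

theorem hom_ext {f g : UGroup →* G} (ha : f Ua = g Ua) (hb : f Ub = g Ub) (hc : f Uc = g Uc) :
    f = g :=
  MonoidHom.eq_of_eqOn_dense closure_generators <| by simp [Set.EqOn, *]

end UGroup

section KernelRepresentation

namespace KModel

/-- The automorphism of `KModel` which models the conjugation `k ↦ a k a⁻¹`. -/
def conjA : KModel → KModel
  | (r i, e) => (r (i + 2 * (toAdd e).cast), e * ofAdd i.cast)
  | (sr i, e) => (sr (i + 2 * (toAdd e).cast), e * ofAdd i.cast)

/-- The automorphism of `KModel` which models the conjugation `k ↦ b k b⁻¹`. -/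
def conjB : KModel → KModel
  | (r i, e) => (r (i + 2 * (toAdd e).cast), e * ofAdd i.cast)
  | (sr i, e) => (sr (i + 2 * (toAdd e).cast + 3), e * ofAdd (i.cast + 1))

/-- The automorphism of `KModel` which models the conjugation `k ↦ c k c⁻¹`. -/
def conjC : KModel → KModel
  | (r i, e) => (r (-i), e * ofAdd i.cast)
  | (sr i, e) => (sr (1 - i), e * ofAdd i.cast)

/-- The permutation given by a map whose fourth iterate is the identity. -/
def permOfIterateFour {X : Type*} (f : X → X) (hf : ∀ x, f (f (f (f x))) = x) : Equiv.Perm X where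
  toFun := f
  invFun x := f (f (f x))
  left_inv := hf
  right_inv := hf

/-- The permutation by which `a` acts on two orbits of `KModel`: `inl k` stands for the point
`k p` and `inr k` for `k a p`, where the base point `p` is fixed by `b` and `c`. -/
def permA : Equiv.Perm (KModel ⊕ KModel) :=
  permOfIterateFour (Sum.elim (fun k => .inr (conjA k)) fun k => .inl (conjA k * (sr 0, 1)))
    (by decide)

/-- The permutation by which `b` acts on the two orbits of `permA`. -/
def permB : Equiv.Perm (KModel ⊕ KModel) :=
  permOfIterateFour (Sum.map conjB fun k => conjB k * (sr 0, 1)) (by decide)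

/-- The permutation by which `c` acts on the two orbits of `permA`. -/
def permC : Equiv.Perm (KModel ⊕ KModel) :=
  permOfIterateFour (Sum.map conjC conjC) (by decide)

set_option maxRecDepth 100000 in
theorem isUTriple_perm : IsUTriple permA permB permC := by
  constructor <;> exact Equiv.ext (by decide)

set_option maxRecDepth 100000 in
theorem permA_mul_permC_inv_pow : (permA * permC⁻¹) ^ 4 = (permC⁻¹ * permA) ^ 4 :=
  Equiv.ext (by decide)

end KModel

namespace UGroup

/-- The permutation representation of `U` in which the normal closure of `a²` acts freely, by left
translation on two copies of itself. -/
def permHom : UGroup →* Equiv.Perm (KModel ⊕ KModel) := lift KModel.isUTriple_perm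

set_option maxRecDepth 100000 in
theorem permHom_comp_kernelHom :
    permHom.comp isUTriple.kernelHom = MulAction.toPermHom KModel (KModel ⊕ KModel) := by
  refine MonoidHom.eq_of_eqOn_dense KModel.closure_eq_top ?_
  simp only [permHom, Set.EqOn, Set.mem_insert_iff, Set.mem_singleton_iff, forall_eq_or_imp,
    forall_eq, MonoidHom.comp_apply, IsUTriple.kernelHom_sr_zero, IsUTriple.kernelHom_sr_one,
    IsUTriple.kernelHom_sr_zero_ofAdd_one, map_conjSq, lift_a, lift_b]
  refine ⟨?_, ?_, ?_⟩ <;> exact Equiv.ext (by decide)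

theorem permHom_comp_kernelHom_injective :
    Function.Injective (permHom.comp isUTriple.kernelHom) := by
  rw [permHom_comp_kernelHom]
  exact MulAction.toPerm_injective

theorem kernelHom_injective : Function.Injective isUTriple.kernelHom :=
  .of_comp permHom_comp_kernelHom_injective

theorem disjoint_range_kernelHom_ker_permHom :
    Disjoint isUTriple.kernelHom.range permHom.ker := by
  rw [disjoint_def]
  rintro _ ⟨k, rfl⟩ hk
  rw [permHom_comp_kernelHom_injective (hk.trans (map_one (permHom.comp isUTriple.kernelHom)).symm),
    map_one]

end UGroup

end KernelRepresentation

section PlaneGroup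

/-- The quarter turn `(x, y) ↦ (-y, x)` of the square lattice. -/
def quarterTurn : MulAut IntSq where
  toFun v := (v.2⁻¹, v.1)
  invFun v := (v.2, v.1⁻¹)
  left_inv v := by simp
  right_inv v := by simp
  map_mul' v w := by simp [mul_comm]

/-- The reflection `(x, y) ↦ (-x, y)` of the square lattice. -/
def mirror : MulAut IntSq where
  toFun v := (v.1⁻¹, v.2)
  invFun v := (v.1⁻¹, v.2)
  left_inv v := by simp
  right_inv v := by simp
  map_mul' v w := by simp [mul_comm]

/-- The action of the point group `D₄` on the square lattice. -/
def pointAction : DihedralGroup 4 →* MulAut IntSq :=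
  dihedralLift quarterTurn mirror (by ext v <;> simp [pow_succ, quarterTurn])
    (by ext v <;> simp [sq, mirror]) (by ext v <;> simp [sq, quarterTurn, mirror])

/-- The plane crystallographic group `p4m`, i.e. the symmetry group of the square lattice. -/
abbrev P4m : Type := IntSq ⋊[pointAction] DihedralGroup 4

theorem pointAction_r_one (v : IntSq) : pointAction (r 1) v = (v.2⁻¹, v.1) := by
  rw [pointAction, dihedralLift_r_one]; rfl

theorem pointAction_sr_zero (v : IntSq) : pointAction (sr 0) v = (v.1⁻¹, v.2) := by
  rw [pointAction, dihedralLift_sr_zero]; rfl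

namespace P4m

open SemidirectProduct

/-- The image of `a` in `p4m`: a reflection through the origin. -/
def genA : P4m := inr (sr 0)

/-- The image of `b` in `p4m`: the quarter turn about the origin. -/
def genB : P4m := inr (r 1)

/-- The image of `c` in `p4m`: a quarter turn about the centre of a square of the lattice. -/
def genC : P4m := inl (ofAdd 1, 1) * inr (r 1)

theorem isUTriple : IsUTriple genA genB genC := by
  constructor <;> decide

theorem genA_mul_genC_inv_pow : (genA * genC⁻¹) ^ 4 = inl (ofAdd (-2), ofAdd 2) := by decide

theorem genC_inv_mul_genA_pow : (genC⁻¹ * genA) ^ 4 = inl (ofAdd 2, ofAdd 2) := by decide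

theorem genC_mul_genB_inv : genC * genB⁻¹ = inl (ofAdd 1, 1) := by decide

theorem genC_inv_mul_genB : genC⁻¹ * genB = inl (1, ofAdd 1) := by decide

theorem closure_generators : Subgroup.closure {genA, genB, genC} = ⊤ := by
  set S := Subgroup.closure {genA, genB, genC}
  have ha : genA ∈ S := Subgroup.subset_closure (by simp)
  have hb : genB ∈ S := Subgroup.subset_closure (by simp)
  have hc : genC ∈ S := Subgroup.subset_closure (by simp)
  have hinr (d : DihedralGroup 4) : (inr d : P4m) ∈ S := by
    suffices Subgroup.closure {r 1, sr 0} ≤ S.comap inr from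
      this (closure_r_one_sr_zero (n := 4) ▸ mem_top d)
    simpa [Subgroup.closure_le, Set.insert_subset_iff] using ⟨hb, ha⟩
  have hinl (v : IntSq) : (inl v : P4m) ∈ S := by
    have hv : (inl v : P4m) = (genC * genB⁻¹) ^ (toAdd v.1) *
        (genC⁻¹ * genB) ^ (toAdd v.2) := by
      rw [genC_mul_genB_inv, genC_inv_mul_genB, ← map_zpow, ← map_zpow, ← map_mul]
      congr 1
      ext <;> simp [← ofAdd_zsmul]
    rw [hv]
    exact mul_mem (zpow_mem (mul_mem hc (inv_mem hb)) _) (zpow_mem (mul_mem (inv_mem hc) hb) _)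
  rw [eq_top_iff]
  rintro g -
  rw [← inl_left_mul_inr_right g]
  exact mul_mem (hinl _) (hinr _)

end P4m

namespace IsUTriple

variable {G : Type*} [Group G] {a b c : G}

theorem b_mul_c_mul_b (h : IsUTriple a b c) : b * c * b = c⁻¹ := by
  rw [eq_inv_iff_mul_eq_one, mul_assoc, ← sq, h.bc_sq]

theorem commute_translations (h : IsUTriple a b c) : Commute (c * b⁻¹) (c⁻¹ * b) := by
  calc c * b⁻¹ * (c⁻¹ * b) = c ^ 2 * b ^ 2 := by
        rw [← h.b_mul_c_mul_b, sq, sq]; group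
    _ = (c ^ 2)⁻¹ * (b ^ 2)⁻¹ := by rw [h.c_sq_inv, h.b_sq_inv]
    _ = c⁻¹ * (b * c * b) * (b ^ 2)⁻¹ * b⁻¹ * b := by rw [h.b_mul_c_mul_b, sq, sq]; group
    _ = c⁻¹ * b * (c * b⁻¹) := by rw [sq]; group

/-- The homomorphism from `ℤ²` given by the commuting elements `c b⁻¹` and `c⁻¹ b`, which correspond
to the unit translations of `p4m`. -/
def translationHom (h : IsUTriple a b c) : IntSq →* G :=
  intSqLift (c * b⁻¹) (c⁻¹ * b) h.commute_translations

theorem b_conj_translation_fst (h : IsUTriple a b c) : b * (c * b⁻¹) * b⁻¹ = c⁻¹ * b := by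
  calc b * (c * b⁻¹) * b⁻¹ = b * c * b * (b ^ 2)⁻¹ * b⁻¹ := by rw [sq]; group
    _ = c⁻¹ * b := by rw [h.b_mul_c_mul_b, h.b_sq_inv, sq]; group

theorem b_conj_translation_snd : b * (c⁻¹ * b) * b⁻¹ = (c * b⁻¹)⁻¹ := by
  group

theorem a_conj_translation_fst (h : IsUTriple a b c) (ha : a ^ 2 = 1) :
    a * (c * b⁻¹) * a⁻¹ = (c * b⁻¹)⁻¹ := by
  have ha' : a = a⁻¹ := by rw [eq_inv_iff_mul_eq_one, ← sq, ha]
  calc a * (c * b⁻¹) * a⁻¹ = a⁻¹ * (c * b⁻¹) * a := by rw [← ha']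
    _ = (a⁻¹ * c * a) * (a⁻¹ * b * a)⁻¹ := by group
    _ = b * (b * c * b) := by
      rw [h.a_inv_mul_c_mul_a, h.a_inv_mul_b_mul_a, ha, sq]; group
    _ = (c * b⁻¹)⁻¹ := by rw [h.b_mul_c_mul_b]; group

theorem a_conj_translation_snd (h : IsUTriple a b c) (ha : a ^ 2 = 1) :
    a * (c⁻¹ * b) * a⁻¹ = c⁻¹ * b := by
  have ha' : a = a⁻¹ := by rw [eq_inv_iff_mul_eq_one, ← sq, ha]
  calc a * (c⁻¹ * b) * a⁻¹ = a⁻¹ * (c⁻¹ * b) * a := by rw [← ha']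
    _ = (a⁻¹ * c * a)⁻¹ * (a⁻¹ * b * a) := by group
    _ = c⁻¹ * (b ^ 2)⁻¹ * b⁻¹ := by
      rw [h.a_inv_mul_c_mul_a, h.a_inv_mul_b_mul_a, ha]; group
    _ = c⁻¹ * b := by rw [h.b_sq_inv, sq]; group

theorem translationHom_pointAction (h : IsUTriple a b c) (ha : a ^ 2 = 1) (d : DihedralGroup 4)
    (v : IntSq) : h.translationHom (pointAction d v) =
      dihedralLift b a h.b_pow ha h.ab_sq d * h.translationHom v *
        (dihedralLift b a h.b_pow ha h.ab_sq d)⁻¹ := by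
  refine equivariant_of_closure_eq_top closure_r_one_sr_zero ?_ d v
  have conj_apply (g : G) (v : IntSq) : g * h.translationHom v * g⁻¹ =
      (g * (c * b⁻¹) * g⁻¹) ^ toAdd v.1 * (g * (c⁻¹ * b) * g⁻¹) ^ toAdd v.2 := by
    rw [translationHom, intSqLift_apply, conj_zpow, conj_zpow]; group
  rintro d (rfl | rfl) v
  · rw [dihedralLift_r_one, conj_apply, h.b_conj_translation_fst, b_conj_translation_snd,
      pointAction_r_one, translationHom, intSqLift_apply, inv_zpow', toAdd_inv]
    exact h.commute_translations.zpow_zpow _ _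
  · rw [dihedralLift_sr_zero, conj_apply, h.a_conj_translation_fst ha,
      h.a_conj_translation_snd ha, pointAction_sr_zero, translationHom, intSqLift_apply, inv_zpow',
      toAdd_inv]

/-- When `a² = 1`, a triple satisfying the relations of `U` comes from `p4m`. -/
def p4mHom (h : IsUTriple a b c) (ha : a ^ 2 = 1) : P4m →* G :=
  SemidirectProduct.lift h.translationHom (dihedralLift b a h.b_pow ha h.ab_sq) fun d =>
    MonoidHom.ext (h.translationHom_pointAction ha d)

theorem p4mHom_genA (h : IsUTriple a b c) (ha : a ^ 2 = 1) : h.p4mHom ha P4m.genA = a := by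
  simp [p4mHom, P4m.genA, dihedralLift_sr_zero]

theorem p4mHom_genB (h : IsUTriple a b c) (ha : a ^ 2 = 1) : h.p4mHom ha P4m.genB = b := by
  simp [p4mHom, P4m.genB, dihedralLift_r_one]

theorem p4mHom_genC (h : IsUTriple a b c) (ha : a ^ 2 = 1) : h.p4mHom ha P4m.genC = c := by
  simp [p4mHom, translationHom, intSqLift_apply, P4m.genC, dihedralLift_r_one]

end IsUTriple

end PlaneGroup

namespace UGroup

/-- The projection of `U` onto the plane group `p4m`. -/
def toP4m : UGroup →* P4m := lift P4m.isUTriple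

theorem toP4m_surjective : Function.Surjective toP4m := by
  rw [← MonoidHom.range_eq_top, MonoidHom.range_eq_map, ← closure_generators, MonoidHom.map_closure,
    ← P4m.closure_generators]
  simp [toP4m, lift_a, lift_b, lift_c, Set.image_insert_eq]

instance normal_range_kernelHom : isUTriple.kernelHom.range.Normal :=
  isUTriple.normal_range_kernelHom closure_generators

theorem ker_toP4m : toP4m.ker = isUTriple.kernelHom.range := by
  set K := isUTriple.kernelHom.range with hK
  apply le_antisymm
  · have h := isUTriple.map (QuotientGroup.mk' K)
    have ha : QuotientGroup.mk' K Ua ^ 2 = 1 := by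
      rw [← map_pow, ← MonoidHom.mem_ker, QuotientGroup.ker_mk']
      exact ⟨(sr 0, 1), by simp [IsUTriple.kernelHom_sr_zero, IsUTriple.conjSq_zero]⟩
    have hcomp : (h.p4mHom ha).comp toP4m = QuotientGroup.mk' K := by
      apply hom_ext <;> simp only [toP4m, MonoidHom.comp_apply, lift_a, lift_b, lift_c,
        h.p4mHom_genA, h.p4mHom_genB, h.p4mHom_genC]
    calc toP4m.ker ≤ ((h.p4mHom ha).comp toP4m).ker := fun g hg => by
          simp [MonoidHom.mem_ker.1 hg]
      _ = K := by rw [hcomp, QuotientGroup.ker_mk']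
  · have ha : toP4m Ua ^ 2 = 1 := by rw [toP4m, lift_a]; decide
    rw [hK, IsUTriple.range_kernelHom, Subgroup.closure_le]
    rintro _ ⟨i, rfl⟩
    simp [conjSq, ha]

theorem card_ker_toP4m : Nat.card toP4m.ker = 16 := by
  rw [ker_toP4m, ← Nat.card_congr (MonoidHom.ofInjective kernelHom_injective).toEquiv,
    Nat.card_prod, DihedralGroup.nat_card, Nat.card_congr toAdd, Nat.card_zmod]

instance : Group.IsSolvable (DihedralGroup 4) :=
  have : Fact (Nat.Prime 2) := ⟨Nat.prime_two⟩
  have h : IsPGroup 2 (DihedralGroup 4) := .of_card (n := 3) DihedralGroup.nat_card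
  have := h.isNilpotent
  inferInstance

instance : Group.IsSolvable UGroup :=
  have : Group.IsSolvable P4m := isSolvable_semidirect
  Group.isSolvable_of_ker_le_range isUTriple.kernelHom toP4m ker_toP4m.le

theorem toP4m_x : toP4m Ux = SemidirectProduct.inl (ofAdd (-2), ofAdd 2) := by
  simp only [toP4m, Ux, map_pow, map_mul, map_inv, lift_a, lift_c, P4m.genA_mul_genC_inv_pow]

theorem toP4m_y : toP4m Uy = SemidirectProduct.inl (ofAdd 2, ofAdd 2) := by
  simp only [toP4m, Uy, map_pow, map_mul, map_inv, lift_a, lift_c, P4m.genC_inv_mul_genA_pow]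

theorem commute_x_y : Commute Ux Uy := by
  rw [← commutatorElement_eq_one_iff_commute]
  apply disjoint_def.1 (ker_toP4m ▸ disjoint_range_kernelHom_ker_permHom)
  · rw [MonoidHom.mem_ker, map_commutatorElement, commutatorElement_eq_one_iff_commute, toP4m_x,
      toP4m_y]
    exact (Commute.all _ _).map SemidirectProduct.inl
  · have hxy : permHom Ux = permHom Uy := by
      simp only [permHom, Ux, Uy, map_pow, map_mul, map_inv, lift_a, lift_c,
        KModel.permA_mul_permC_inv_pow]
    rw [MonoidHom.mem_ker, map_commutatorElement, hxy, commutatorElement_self]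

theorem toP4m_intSqLift (u v : ℤ) : toP4m (intSqLift Ux Uy commute_x_y (ofAdd u, ofAdd v)) =
    SemidirectProduct.inl (ofAdd (2 * (v - u)), ofAdd (2 * (u + v))) := by
  rw [intSqLift_apply, map_mul, map_zpow, map_zpow, toP4m_x, toP4m_y, ← map_zpow, ← map_zpow,
    ← map_mul]
  refine congrArg _ (Prod.ext (toAdd.injective ?_) (toAdd.injective ?_)) <;>
    simp only [toAdd_ofAdd, toAdd_mul, toAdd_zpow, Prod.pow_mk, Prod.mk_mul_mk,
      Int.zsmul_eq_mul] <;> ring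

theorem toP4m_comp_intSqLift_injective :
    Function.Injective (toP4m.comp (intSqLift Ux Uy commute_x_y)) := by
  rw [injective_iff_map_eq_one]
  rintro ⟨u, v⟩ huv
  obtain ⟨hsub, hadd⟩ := Prod.ext_iff.1 <| SemidirectProduct.inl_injective <|
    ((toP4m_intSqLift (toAdd u) (toAdd v)).symm.trans huv).trans (map_one _).symm
  have hsub' : 2 * (toAdd v - toAdd u) = 0 := congrArg toAdd hsub
  have hadd' : 2 * (toAdd u + toAdd v) = 0 := congrArg toAdd hadd
  exact Prod.ext (toAdd.injective <| show toAdd u = 0 by lia)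
    (toAdd.injective <| show toAdd v = 0 by lia)

theorem disjoint_UN_ker_toP4m (m : ℕ) : Disjoint (UN m) toP4m.ker := by
  have hle : UN m ≤ (intSqLift Ux Uy commute_x_y).range := by
    rw [UN, Subgroup.closure_le, Set.insert_subset_iff, Set.singleton_subset_iff]
    exact ⟨⟨(ofAdd m, 1), by simp [intSqLift_apply]⟩, ⟨(1, ofAdd m), by simp [intSqLift_apply]⟩⟩
  rw [disjoint_def]
  intro g hg hker
  obtain ⟨w, rfl⟩ := hle hg
  rw [toP4m_comp_intSqLift_injective (hker.trans (map_one (toP4m.comp _)).symm), map_one]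

theorem map_toP4m_UN (m : ℕ) : (UN m).map toP4m = (Subgroup.closure
    {(ofAdd (-(2 * m : ℕ) : ℤ), ofAdd ((2 * m : ℕ) : ℤ)),
      (ofAdd ((2 * m : ℕ) : ℤ), ofAdd ((2 * m : ℕ) : ℤ))}).map SemidirectProduct.inl := by
  rw [UN, MonoidHom.map_closure, MonoidHom.map_closure, Set.image_pair, Set.image_pair, map_pow,
    map_pow, toP4m_x, toP4m_y, ← map_pow, ← map_pow, Prod.pow_mk, Prod.pow_mk, ← ofAdd_nsmul,
    ← ofAdd_nsmul]
  simp [mul_comm]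

theorem index_UN (m : ℕ) [(UN m).Normal] : (UN m).index = 1024 * m ^ 2 := by
  rw [index_eq_of_disjoint_ker toP4m_surjective (disjoint_UN_ker_toP4m m), map_toP4m_UN,
    index_map_inl, index_closure_diagonals, card_ker_toP4m, DihedralGroup.nat_card]
  ring

end UGroup

/-- For every positive integer `m`, the quotient `G_m = U / N_m` is a solvable group
of order `1024 m^2`. -/
theorem Gm_solvable (m : ℕ) (hm : 0 < m) (hnorm : (UN m).Normal) :
    haveI := hnorm
    IsSolvable (UGroup ⧸ UN m) ∧ Nat.card (UGroup ⧸ UN m) = 1024 * m ^ 2 := by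
  have := hnorm
  exact ⟨Group.isSolvable_of_surjective (QuotientGroup.mk'_surjective (UN m)), UGroup.index_UN m⟩
end

section
/- For every positive integer m, the subgroup of the quotient group G_m = U/N_m generated by the images of a and b has order 128; consequently, the restriction to this subgroup of the natural homomorphism G_m → G_1 is injective. -/
/-!
Put `t = ab⁻¹` and `s = a⁻¹b`. The relators in `a` and `b` alone say that `t` and `s` commute, that
conjugation by `a` acts on the lattice `⟨t, s⟩` as multiplication by `i` acts on `ℤ[i]` (with
`t ↦ 1`, `s ↦ i`), and that `4(1 + i)` kills this lattice. So in every quotient of `U` the subgroup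
`⟨a, b⟩` consists of the at most `32 * 4` elements `t^i s^j a^k`.

Conversely, `a` and `b` can be realised by affine maps `z ↦ i z + w` of `ℤ[i] / 8` with `w` a
multiple of `1 + i`, and there these 128 elements are distinct. Inducing this action from `⟨a, b⟩`,
which has index 8 in `U / N_1`, gives an action of `U` on eight copies of `ℤ[i] / 8` that is trivial
on `N_1`. Hence the 128 elements remain distinct in `U / N` for every normal `N ≤ N_1`.
-/

section NormalForm

variable {G K : Type*} [Group G] [Group K] {a b : G}

/-- The relations of `U` that involve only `a` and `b`: both are quarter turns of a square lattice,
with the lattice truncated by the last relation. -/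
structure IsQuarterTurnPair (a b : G) : Prop where
  left_pow_four : a ^ 4 = 1
  right_pow_four : b ^ 4 = 1
  mul_sq : (a * b) ^ 2 = 1
  sq_mul_sq_pow_four : (a ^ 2 * b ^ 2) ^ 4 = 1

/-- The normal form `t^i s^j a^k` of an element of `⟨a, b⟩`, where `t = ab⁻¹` and `s = a⁻¹b` are the
basic translations and `p = (i, j, k)`. -/
def abNormalForm (a b : G) (p : Fin 8 × Fin 4 × Fin 4) : G :=
  (a * b⁻¹) ^ (p.1 : ℕ) * (a⁻¹ * b) ^ (p.2.1 : ℕ) * a ^ (p.2.2 : ℕ)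

theorem map_abNormalForm (f : G →* K) (a b : G) (p : Fin 8 × Fin 4 × Fin 4) :
    f (abNormalForm a b p) = abNormalForm (f a) (f b) p := by
  simp only [abNormalForm, map_mul, map_pow, map_inv]

theorem abNormalForm_mem_closure (a b : G) (p : Fin 8 × Fin 4 × Fin 4) :
    abNormalForm a b p ∈ Subgroup.closure {a, b} := by
  have ha : a ∈ Subgroup.closure {a, b} := Subgroup.subset_closure (Set.mem_insert _ _)
  have hb : b ∈ Subgroup.closure {a, b} := Subgroup.subset_closure (Set.mem_insert_of_mem _ rfl)
  exact mul_mem (mul_mem (pow_mem (mul_mem ha (inv_mem hb)) _)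
    (pow_mem (mul_mem (inv_mem ha) hb) _)) (pow_mem ha _)

theorem exists_zpow_eq_zpow_mul_pow_fin (x : G) (n : ℕ) [NeZero n] (j : ℤ) :
    ∃ (q : ℤ) (r : Fin n), x ^ j = (x ^ n) ^ q * x ^ (r : ℕ) := by
  have hn : (0 : ℤ) < n := by exact_mod_cast NeZero.pos n
  lift j % n to ℕ using Int.emod_nonneg j hn.ne' with r hr
  refine ⟨j / n, ⟨r, by have := Int.emod_lt_of_pos j hn; omega⟩, ?_⟩
  rw [← zpow_natCast, ← zpow_natCast, ← zpow_mul, ← zpow_add, hr, Int.mul_ediv_add_emod]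

theorem semiconjBy_inv_mul (a b : G) : SemiconjBy a (a⁻¹ * b) (a * b⁻¹)⁻¹ := by
  rw [SemiconjBy]; group

namespace IsQuarterTurnPair

theorem map (h : IsQuarterTurnPair a b) (f : G →* K) : IsQuarterTurnPair (f a) (f b) where
  left_pow_four := by rw [← map_pow, h.left_pow_four, map_one]
  right_pow_four := by rw [← map_pow, h.right_pow_four, map_one]
  mul_sq := by rw [← map_mul, ← map_pow, h.mul_sq, map_one]
  sq_mul_sq_pow_four := by simp only [← map_pow, ← map_mul, h.sq_mul_sq_pow_four, map_one]

theorem right_inv_mul_left_inv (h : IsQuarterTurnPair a b) : b⁻¹ * a⁻¹ = a * b := by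
  rw [← mul_inv_rev, inv_eq_iff_mul_eq_one, ← pow_two, h.mul_sq]

theorem right_mul_left (h : IsQuarterTurnPair a b) : b * a = a⁻¹ * b⁻¹ := by
  calc b * a = a⁻¹ * (a * b) * a := by group
    _ = a⁻¹ * b⁻¹ := by rw [← h.right_inv_mul_left_inv]; group

theorem translation_mul_translation (h : IsQuarterTurnPair a b) :
    (a * b⁻¹) * (a⁻¹ * b) = a ^ 2 * b ^ 2 := by
  calc (a * b⁻¹) * (a⁻¹ * b) = a * (b⁻¹ * a⁻¹) * b := by group
    _ = a ^ 2 * b ^ 2 := by rw [h.right_inv_mul_left_inv]; simp only [pow_two, mul_assoc]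

theorem commute_translation (h : IsQuarterTurnPair a b) : Commute (a * b⁻¹) (a⁻¹ * b) := by
  refine h.translation_mul_translation.trans (Eq.symm ?_)
  calc (a⁻¹ * b) * (a * b⁻¹) = a⁻¹ * (b * a) * b⁻¹ := by group
    _ = (a ^ 4)⁻¹ * a ^ 2 * b ^ 2 * (b ^ 4)⁻¹ := by rw [h.right_mul_left]; group
    _ = a ^ 2 * b ^ 2 := by rw [h.left_pow_four, h.right_pow_four]; group

theorem semiconjBy_mul_inv (h : IsQuarterTurnPair a b) : SemiconjBy a (a * b⁻¹) (a⁻¹ * b) := by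
  calc a * (a * b⁻¹) = a ^ 4 * (a⁻¹ * (a⁻¹ * b⁻¹)) := by simp [pow_succ, mul_assoc]
    _ = a⁻¹ * b * a := by rw [h.left_pow_four, ← h.right_mul_left]; group

theorem translation_pow_four_mul (h : IsQuarterTurnPair a b) :
    (a * b⁻¹) ^ 4 * (a⁻¹ * b) ^ 4 = 1 := by
  rw [← h.commute_translation.mul_pow, h.translation_mul_translation, h.sq_mul_sq_pow_four]

theorem translation_pow_four_eq (h : IsQuarterTurnPair a b) :
    (a⁻¹ * b) ^ 4 = (a * b⁻¹) ^ 4 := by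
  -- Conjugation by `a` turns `t^4 s^4 = 1` into `s^4 t^{-4} = 1`.
  have hconj := (h.semiconjBy_mul_inv.pow_right 4).mul_right ((semiconjBy_inv_mul a b).pow_right 4)
  rwa [h.translation_pow_four_mul, SemiconjBy, mul_one, right_eq_mul, inv_pow,
    mul_inv_eq_one] at hconj

theorem translation_pow_eight (h : IsQuarterTurnPair a b) : (a * b⁻¹) ^ 8 = 1 := by
  calc (a * b⁻¹) ^ 8 = (a * b⁻¹) ^ 4 * (a⁻¹ * b) ^ 4 := by
        rw [h.translation_pow_four_eq, ← pow_add]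
    _ = 1 := h.translation_pow_four_mul

theorem zpow_mem_range_abNormalForm (h : IsQuarterTurnPair a b) (i j k : ℤ) :
    (a * b⁻¹) ^ i * (a⁻¹ * b) ^ j * a ^ k ∈ Set.range (abNormalForm a b) := by
  obtain ⟨q, j', hj⟩ := exists_zpow_eq_zpow_mul_pow_fin (a⁻¹ * b) 4 j
  obtain ⟨_, i', hi⟩ := exists_zpow_eq_zpow_mul_pow_fin (a * b⁻¹) 8 (i + 4 * q)
  obtain ⟨_, k', hk⟩ := exists_zpow_eq_zpow_mul_pow_fin a 4 k
  rw [h.translation_pow_eight, one_zpow, one_mul] at hi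
  rw [h.left_pow_four, one_zpow, one_mul] at hk
  refine ⟨(i', j', k'), ?_⟩
  simp only [abNormalForm, ← hi, ← hk, hj, h.translation_pow_four_eq, zpow_add, zpow_mul,
    mul_assoc, zpow_ofNat]

theorem left_mul_zpow (h : IsQuarterTurnPair a b) (i j k : ℤ) :
    a * ((a * b⁻¹) ^ i * (a⁻¹ * b) ^ j * a ^ k) =
      (a * b⁻¹) ^ (-j) * (a⁻¹ * b) ^ i * a ^ (k + 1) := by
  have hconj : SemiconjBy a ((a * b⁻¹) ^ i * (a⁻¹ * b) ^ j) ((a⁻¹ * b) ^ i * (a * b⁻¹)⁻¹ ^ j) :=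
    (h.semiconjBy_mul_inv.zpow_right i).mul_right ((semiconjBy_inv_mul a b).zpow_right j)
  rw [← mul_assoc, hconj.eq, inv_zpow', ← (h.commute_translation.zpow_zpow (-j) i).eq, mul_assoc,
    ← zpow_one_add, add_comm]

theorem left_mul_mem_range_abNormalForm (h : IsQuarterTurnPair a b) {g : G}
    (hg : g ∈ Set.range (abNormalForm a b)) : a * g ∈ Set.range (abNormalForm a b) := by
  obtain ⟨p, rfl⟩ := hg
  have hp := h.left_mul_zpow p.1 p.2.1 p.2.2
  simp only [zpow_natCast] at hp
  rw [abNormalForm, hp]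
  exact_mod_cast h.zpow_mem_range_abNormalForm (-(p.2.1 : ℕ)) (p.1 : ℕ) ((p.2.2 : ℕ) + 1)

theorem right_mul_mem_range_abNormalForm (h : IsQuarterTurnPair a b) {g : G}
    (hg : g ∈ Set.range (abNormalForm a b)) : b * g ∈ Set.range (abNormalForm a b) := by
  obtain ⟨p, hp⟩ := h.left_mul_mem_range_abNormalForm hg
  have hb : b * g = (a * b⁻¹) ^ (p.1 - 1 : ℤ) * (a⁻¹ * b) ^ (p.2.1 : ℤ) * a ^ (p.2.2 : ℤ) := by
    calc b * g = (a * b⁻¹)⁻¹ * (a * g) := by group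
      _ = _ := by
        rw [← hp, abNormalForm, zpow_sub_one, ← (Commute.self_zpow _ _).inv_left.eq]
        simp only [zpow_natCast, mul_assoc]
  rw [hb]
  exact h.zpow_mem_range_abNormalForm _ _ _

open scoped Pointwise in
theorem closure_eq_range_abNormalForm (h : IsQuarterTurnPair a b) :
    (Subgroup.closure {a, b} : Set G) = Set.range (abNormalForm a b) := by
  refine Set.Subset.antisymm ?_ (Set.range_subset_iff.2 (abNormalForm_mem_closure a b))
  have hle : Subgroup.closure {a, b} ≤ MulAction.stabilizer G (Set.range (abNormalForm a b)) := by
    simp only [Subgroup.closure_le, Set.insert_subset_iff, Set.singleton_subset_iff,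
      SetLike.mem_coe, MulAction.mem_stabilizer_set_iff_smul_set_subset (Set.finite_range _)]
    exact ⟨Set.smul_set_subset_iff.2 fun _ ↦ h.left_mul_mem_range_abNormalForm,
      Set.smul_set_subset_iff.2 fun _ ↦ h.right_mul_mem_range_abNormalForm⟩
  intro g hg
  have hone : (1 : G) ∈ Set.range (abNormalForm a b) := ⟨(0, 0, 0), by simp [abNormalForm]⟩
  have hmem : g • (1 : G) ∈ g • Set.range (abNormalForm a b) := Set.smul_mem_smul_set hone
  rwa [MulAction.mem_stabilizer_iff.1 (hle hg), smul_eq_mul, mul_one] at hmem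

end IsQuarterTurnPair

end NormalForm

section Affine

/-- `ℤ[i] / 8`, with `(x, y)` standing for `x + y i`. -/
abbrev GaussMod8 : Type := ZMod 8 × ZMod 8

/-- Multiplication by `i` on `ℤ[i] / 8`. -/
def mulI : Equiv.Perm GaussMod8 where
  toFun z := (-z.2, z.1)
  invFun z := (z.2, -z.1)
  left_inv _ := by simp
  right_inv _ := by simp

/-- The affine map `z ↦ i^k z + w` of `ℤ[i] / 8`. -/
def gaussAffine (k : ℕ) (w : GaussMod8) : Equiv.Perm GaussMod8 :=
  Equiv.addRight w * mulI ^ k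

/-- The affine map `z ↦ i z` that models `a`. -/
def affineA : Equiv.Perm GaussMod8 := gaussAffine 1 0

/-- The affine map `z ↦ i z - (1 + i)` that models `b`. -/
def affineB : Equiv.Perm GaussMod8 := gaussAffine 1 (-1, -1)

theorem abNormalForm_affine_apply (p : Fin 8 × Fin 4 × Fin 4) (z : GaussMod8) :
    abNormalForm affineA affineB p z =
      (mulI ^ (p.2.2 : ℕ)) z + ((p.2.1 : ℕ) • (-1, 1) + (p.1 : ℕ) • (1, 1)) := by
  have ha : affineA = mulI := by simp [affineA, gaussAffine]
  have ht : affineA * affineB⁻¹ = Equiv.addRight (1, 1) := by decide +kernel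
  have hs : affineA⁻¹ * affineB = Equiv.addRight (-1, 1) := by decide +kernel
  have htranslate (n : ℕ) (w u : GaussMod8) : (Equiv.addRight w ^ n) u = u + n • w := by
    rw [← Equiv.Perm.iterate_eq_pow, Equiv.coe_addRight, add_right_iterate]
  rw [abNormalForm, ht, hs, ha]
  simp only [Equiv.Perm.mul_apply, htranslate, add_assoc]

theorem abNormalForm_affine_injective : Function.Injective (abNormalForm affineA affineB) := by
  rintro ⟨i, j, k⟩ ⟨i', j', k'⟩ h
  have hz (z : GaussMod8) := DFunLike.congr_fun h z
  simp only [abNormalForm_affine_apply] at hz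
  have htranslation : ∀ (i i' : Fin 8) (j j' : Fin 4),
      (j : ℕ) • ((-1, 1) : GaussMod8) + (i : ℕ) • (1, 1) = (j' : ℕ) • (-1, 1) + (i' : ℕ) • (1, 1) →
        i = i' ∧ j = j' := by decide +kernel
  have hrotation : ∀ k k' : Fin 4, (mulI ^ (k : ℕ)) (1, 0) = (mulI ^ (k' : ℕ)) (1, 0) → k = k' := by
    decide +kernel
  have hmulI_zero (k : ℕ) : (mulI ^ k) 0 = 0 :=
    Equiv.Perm.pow_apply_eq_self_of_apply_eq_self (by decide) k
  obtain ⟨rfl, rfl⟩ := htranslation i i' j j' (by simpa only [hmulI_zero, zero_add] using hz 0)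
  obtain rfl := hrotation k k' (add_right_cancel (hz (1, 0)))
  rfl

end Affine

section InducedAction

theorem semiconj_abNormalForm {α β : Type*} {f : α → β} {σ τ : Equiv.Perm α} {σ' τ' : Equiv.Perm β}
    (hσ : Function.Semiconj f σ σ') (hτ : Function.Semiconj f τ τ')
    (p : Fin 8 × Fin 4 × Fin 4) :
    Function.Semiconj f (abNormalForm σ τ p : Equiv.Perm α)
      (abNormalForm σ' τ' p : Equiv.Perm β) := by
  have hinv {π : Equiv.Perm α} {π' : Equiv.Perm β} (h : Function.Semiconj f π π') :
      Function.Semiconj f π.symm π'.symm :=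
    h.inverses_right π.right_inv π'.left_inv
  have hpow {π : Equiv.Perm α} {π' : Equiv.Perm β} (h : Function.Semiconj f π π') (n : ℕ) :
      Function.Semiconj f (π ^ n : Equiv.Perm α) (π' ^ n : Equiv.Perm β) := by
    simpa only [Equiv.Perm.iterate_eq_pow] using h.iterate_right n
  have ht := hpow (π := σ * τ⁻¹) (π' := σ' * τ'⁻¹) (hσ.comp_right (hinv hτ)) p.1
  have hs := hpow (π := σ⁻¹ * τ) (π' := σ'⁻¹ * τ') ((hinv hσ).comp_right hτ) p.2.1
  exact (ht.comp_right hs).comp_right (hpow hσ p.2.2)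

/-- The action of `a` on eight copies of `ℤ[i] / 8`. Here and in `inducedB`, `inducedC`, copy `j`
belongs to the coset `g_j ⟨a, b⟩` of `U / N_1`, where `g_l = c^l` and
`g_{4+l} = c^(l-1) a c (ab⁻¹)^(-3)` for `l < 4`. A generator `g` sends copy `j` to copy `σ j` by the
affine map that models the element `γ` of `⟨a, b⟩` with `g g_j = g_{σ j} γ`. -/
def inducedA : Equiv.Perm (Fin 8 × GaussMod8) :=
  Equiv.prodShear (c[1, 5] * c[2, 6])
    ![affineA, gaussAffine 0 (3, 3), gaussAffine 2 (-1, -3), gaussAffine 3 (2, 0),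
      gaussAffine 1 (0, -2), gaussAffine 2 (-3, -3), gaussAffine 0 (1, -1), gaussAffine 3 (-2, -2)]

/-- The action of `b` on eight copies of `ℤ[i] / 8`. -/
def inducedB : Equiv.Perm (Fin 8 × GaussMod8) :=
  Equiv.prodShear (c[1, 3, 5, 7] * c[2, 6])
    ![affineB, gaussAffine 3 (1, -1), gaussAffine 2 0, gaussAffine 0 (-4, -2),
      gaussAffine 1 (-3, -3), gaussAffine 3 (3, -3), gaussAffine 0 (-4, 2), gaussAffine 2 0]

/-- The action of `c` on eight copies of `ℤ[i] / 8`. -/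
def inducedC : Equiv.Perm (Fin 8 × GaussMod8) :=
  Equiv.prodShear (c[0, 1, 2, 3] * c[4, 5, 6, 7]) fun _ ↦ 1

theorem lift_induced_eq_one :
    ∀ r ∈ Urels, FreeGroup.lift ![inducedA, inducedB, inducedC] r = 1 := by
  simp only [Urels, Set.forall_mem_insert, Set.mem_singleton_iff, forall_eq, map_mul, map_pow,
    map_inv, FreeGroup.lift_apply_of]
  refine ⟨?_, ?_, ?_, ?_, ?_, ?_, ?_, ?_, ?_⟩ <;> decide +kernel

/-- The action of `U` on eight copies of `ℤ[i] / 8` induced from the affine action of `⟨a, b⟩`. -/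
def inducedRep : UGroup →* Equiv.Perm (Fin 8 × GaussMod8) :=
  PresentedGroup.toGroup lift_induced_eq_one

theorem inducedRep_Ua : inducedRep Ua = inducedA := PresentedGroup.toGroup.of lift_induced_eq_one

theorem inducedRep_Ub : inducedRep Ub = inducedB := PresentedGroup.toGroup.of lift_induced_eq_one

theorem inducedRep_Uc : inducedRep Uc = inducedC := PresentedGroup.toGroup.of lift_induced_eq_one

theorem UN_one_le_ker_inducedRep : UN 1 ≤ inducedRep.ker := by
  simp only [UN, pow_one, Subgroup.closure_le, Set.insert_subset_iff, Set.singleton_subset_iff,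
    SetLike.mem_coe, MonoidHom.mem_ker, Ux, Uy, map_pow, map_mul, map_inv, inducedRep_Ua,
    inducedRep_Uc]
  constructor <;> decide +kernel

theorem abNormalForm_induced_injective : Function.Injective (abNormalForm inducedA inducedB) := by
  intro p q hpq
  have hsemi := semiconj_abNormalForm (f := Prod.mk (0 : Fin 8))
    (σ := affineA) (τ := affineB) (σ' := inducedA) (τ' := inducedB) (fun _ ↦ rfl) (fun _ ↦ rfl)
  refine abNormalForm_affine_injective (Equiv.ext fun z ↦ Prod.mk_right_injective (0 : Fin 8) ?_)
  rw [hsemi p z, hsemi q z, hpq]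

end InducedAction

section Quotient

theorem isQuarterTurnPair_Ua_Ub : IsQuarterTurnPair Ua Ub where
  left_pow_four := PresentedGroup.one_of_mem (rels := Urels) (by simp [Urels])
  right_pow_four := PresentedGroup.one_of_mem (rels := Urels) (by simp [Urels])
  mul_sq := PresentedGroup.one_of_mem (rels := Urels) (by simp [Urels])
  sq_mul_sq_pow_four := PresentedGroup.one_of_mem (rels := Urels) (by simp [Urels])

variable (N : Subgroup UGroup) [N.Normal]

theorem coe_closure_mk_Ua_Ub :
    (Subgroup.closure {(QuotientGroup.mk Ua : UGroup ⧸ N), QuotientGroup.mk Ub} :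
      Set (UGroup ⧸ N)) = Set.range (abNormalForm (QuotientGroup.mk Ua) (QuotientGroup.mk Ub)) :=
  (isQuarterTurnPair_Ua_Ub.map (QuotientGroup.mk' N)).closure_eq_range_abNormalForm

variable {N} in
theorem abNormalForm_mk_injective (hN : N ≤ UN 1) :
    Function.Injective
      (abNormalForm (QuotientGroup.mk Ua : UGroup ⧸ N) (QuotientGroup.mk Ub)) := by
  let ρ := QuotientGroup.lift N inducedRep (hN.trans UN_one_le_ker_inducedRep)
  have hρ (p) : ρ (abNormalForm (QuotientGroup.mk Ua) (QuotientGroup.mk Ub) p) =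
      abNormalForm inducedA inducedB p := by
    rw [map_abNormalForm, ← inducedRep_Ua, ← inducedRep_Ub]
    rfl
  refine Function.Injective.of_comp (f := ρ) ?_
  simpa only [Function.comp_def, hρ] using abNormalForm_induced_injective

end Quotient

theorem ab_image_order_128_general (N M : Subgroup UGroup) [N.Normal] [M.Normal] (hNM : N ≤ M)
    (hM : M ≤ UN 1) :
    Nat.card (Subgroup.closure {(QuotientGroup.mk Ua : UGroup ⧸ N), QuotientGroup.mk Ub}) = 128 ∧
    Set.InjOn (QuotientGroup.map N M (MonoidHom.id UGroup) hNM)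
      (Subgroup.closure {(QuotientGroup.mk Ua : UGroup ⧸ N), QuotientGroup.mk Ub} :
        Set (UGroup ⧸ N)) := by
  constructor
  · rw [← SetLike.coe_sort_coe, coe_closure_mk_Ua_Ub,
      Nat.card_range_of_injective (abNormalForm_mk_injective (hNM.trans hM))]
    simp
  · rw [coe_closure_mk_Ua_Ub]
    refine Function.Injective.injOn_range ?_
    have hmap : QuotientGroup.map N M (MonoidHom.id UGroup) hNM ∘
        abNormalForm (QuotientGroup.mk Ua) (QuotientGroup.mk Ub) =
          abNormalForm (QuotientGroup.mk Ua) (QuotientGroup.mk Ub) :=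
      funext (map_abNormalForm _ _ _)
    exact hmap ▸ abNormalForm_mk_injective hM

/-- For every positive integer `m`, the subgroup of `G_m = U / N_m` generated by the
images of `a` and `b` has order `128`; consequently the restriction to this subgroup of
the natural homomorphism `G_m → G_1` is injective. -/
theorem ab_image_order_128 (m : ℕ) (hm : 0 < m)
    (hnm : (UN m).Normal) (hn1 : (UN 1).Normal) (hle : UN m ≤ UN 1) :
    haveI := hnm
    haveI := hn1
    Nat.card (Subgroup.closure {(QuotientGroup.mk Ua : UGroup ⧸ UN m),
        (QuotientGroup.mk Ub : UGroup ⧸ UN m)}) = 128 ∧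
    Set.InjOn (QuotientGroup.map (UN m) (UN 1) (MonoidHom.id UGroup) (by simpa using hle))
      ((Subgroup.closure {(QuotientGroup.mk Ua : UGroup ⧸ UN m),
        (QuotientGroup.mk Ub : UGroup ⧸ UN m)} : Subgroup (UGroup ⧸ UN m)) :
          Set (UGroup ⧸ UN m)) :=
  ab_image_order_128_general (UN m) (UN 1) hle le_rfl
end

section
/- In the quotient group G_1 = U/N_1, the image of the element a^{-2} c^2 (a^2 b)^2 (a^{-1} c)^2 of U has order 2; in particular it is non-trivial. -/
/-
Write `e i = a ^ i * b ^ 2 * a ^ (-i)`. The relator `[a,c⁻¹]b^2` says that `c` conjugates `a` to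
`ab^2`, and then the word `a⁻²c²(a²b)²(a⁻¹c)²` is a conjugate of `(e 0 * e 2) * (e 3 * e 1)`. From
`(b^2 * a) ^ 4 = 1` one gets `e 0 * e 1 * e 2 * e 3 = 1`, and from `(b^2 * a^2) ^ 4 = 1` that
`e 0 * e 2` is an involution, as is its conjugate `e 3 * e 1`. These relations force the two
involutions to commute, so the square of the word is trivial already in `U`.

For non-triviality, `U` acts on `𝔽₂⁶` by quadratic maps such that `x` and `y` act trivially, whereas
the word acts as a nonzero translation.
-/

section Group

variable {G : Type*} [Group G]

theorem inv_eq_self_of_sq_eq_one {g : G} (hg : g ^ 2 = 1) : g⁻¹ = g :=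
  inv_eq_of_mul_eq_one_left (by rwa [← sq])

theorem commute_of_sq_eq_one {p q : G} (hp : p ^ 2 = 1) (hq : q ^ 2 = 1)
    (hpq : (p * q) ^ 2 = 1) : Commute p q :=
  calc p * q = (p * q)⁻¹ := (inv_eq_self_of_sq_eq_one hpq).symm
    _ = q * p := by
      rw [mul_inv_rev, inv_eq_self_of_sq_eq_one hp, inv_eq_self_of_sq_eq_one hq]

theorem commute_mul_mul_of_prod_eq_one {p q r s : G} (hp : p ^ 2 = 1) (hq : q ^ 2 = 1)
    (hr : r ^ 2 = 1) (hs : s ^ 2 = 1) (hpr : Commute p r) (h : p * q * r * s = 1) :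
    Commute (p * r) (s * q) := by
  have s_eq : s = p * q * r := by
    rw [← inv_eq_self_of_sq_eq_one hs, inv_eq_of_mul_eq_one_left h]
  have s_eq' : s = r * q * p := by
    rw [← inv_eq_self_of_sq_eq_one hs, s_eq]
    simp only [mul_inv_rev, inv_eq_self_of_sq_eq_one, hp, hq, hr, mul_assoc]
  have hprq : Commute (p * r) q :=
    calc p * r * q = r * (p * q * r) * r⁻¹ := by rw [hpr.eq]; group
      _ = r * (r * q * p) * r⁻¹ := by rw [← s_eq, s_eq']
      _ = r ^ 2 * (q * (p * r⁻¹)) := by simp only [sq, mul_assoc]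
      _ = q * (p * r) := by rw [hr, one_mul, inv_eq_self_of_sq_eq_one hr]
  have hprr : Commute (p * r) r := hpr.mul_left (Commute.refl r)
  have hprp : Commute (p * r) p := (Commute.refl p).mul_left hpr.symm
  exact s_eq ▸ ((hprp.mul_right hprq).mul_right hprr).mul_right hprq

theorem pow_mul_comm_eq_one_iff {g h : G} {n : ℕ} : (g * h) ^ n = 1 ↔ (h * g) ^ n = 1 := by
  rw [show g * h = g * (h * g) * g⁻¹ by group, conj_pow, conj_eq_one_iff]

/-- The conjugate `a ^ i * z * a ^ (-i)`; for `z = b^2` in `U` these are the involutions whose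
products express the word of the theorem. -/
def conjByPow (a z : G) (i : ℕ) : G := a ^ i * z * (a ^ i)⁻¹

theorem conjByPow_sq_eq_one {z : G} (hz : z ^ 2 = 1) (a : G) (i : ℕ) :
    conjByPow a z i ^ 2 = 1 := by
  rw [conjByPow, conj_pow, hz, mul_one, mul_inv_cancel]

theorem mul_pow_four_eq_prod_conjByPow (a z : G) :
    (z * a) ^ 4 =
      conjByPow a z 0 * conjByPow a z 1 * conjByPow a z 2 * conjByPow a z 3 * a ^ 4 := by
  simp only [conjByPow, pow_succ]
  group

theorem prod_conjByPow_sq_eq_one {a z : G} (ha : a ^ 4 = 1) (hz : z ^ 2 = 1)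
    (hza : (z * a) ^ 4 = 1) (hza' : (z * a ^ 2) ^ 4 = 1) :
    (conjByPow a z 0 * conjByPow a z 2 * (conjByPow a z 3 * conjByPow a z 1)) ^ 2 = 1 := by
  have sq_one := conjByPow_sq_eq_one hz a
  have h02 : (conjByPow a z 0 * conjByPow a z 2) ^ 2 = 1 :=
    calc (conjByPow a z 0 * conjByPow a z 2) ^ 2 = (z * a ^ 2 * (z * a ^ 2) * (a ^ 4)⁻¹) ^ 2 := by
          simp only [conjByPow]; group
      _ = (z * a ^ 2) ^ 4 := by rw [ha, inv_one, mul_one, ← sq, ← pow_mul]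
      _ = 1 := hza'
  have comm02 : Commute (conjByPow a z 0) (conjByPow a z 2) :=
    commute_of_sq_eq_one (sq_one 0) (sq_one 2) h02
  have h31 : (conjByPow a z 3 * conjByPow a z 1) ^ 2 = 1 :=
    calc (conjByPow a z 3 * conjByPow a z 1) ^ 2
        = (a * (conjByPow a z 2 * conjByPow a z 0) * a⁻¹) ^ 2 := by simp only [conjByPow]; group
      _ = 1 := by rw [conj_pow, ← comm02.eq, h02, mul_one, mul_inv_cancel]
  have h0123 : conjByPow a z 0 * conjByPow a z 1 * conjByPow a z 2 * conjByPow a z 3 = 1 := by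
    rw [← hza, mul_pow_four_eq_prod_conjByPow, ha, mul_one]
  have comm := commute_mul_mul_of_prod_eq_one (sq_one 0) (sq_one 1) (sq_one 2) (sq_one 3)
    comm02 h0123
  rw [comm.mul_pow, h02, h31, mul_one]

theorem word_eq_conj_prod_conjByPow {a c z : G} (hc : c ^ 4 = 1)
    (hz : z ^ 2 = 1) (hca : c * a * c⁻¹ = a * z) (hac : a ^ 2 * c ^ 2 * z * (a * c) ^ 2 = 1) :
    a⁻¹ ^ 2 * c ^ 2 * (a * z * a⁻¹) * (a⁻¹ * c) ^ 2 =
      c ^ 2 * (conjByPow a z 0 * conjByPow a z 2 * (conjByPow a z 3 * conjByPow a z 1)) *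
        (c ^ 2)⁻¹ := by
  have mul_sq : (a * c) ^ 2 = a ^ 2 * z * c ^ 2 :=
    calc (a * c) ^ 2 = a * (c * a * c⁻¹) * c ^ 2 := by simp [sq, mul_assoc]
      _ = a ^ 2 * z * c ^ 2 := by simp only [hca, sq, mul_assoc]
  have inv_mul_sq : (a⁻¹ * c) ^ 2 = a⁻¹ * z * a⁻¹ * c ^ 2 :=
    calc (a⁻¹ * c) ^ 2 = a⁻¹ * (c * a * c⁻¹)⁻¹ * c ^ 2 := by simp [sq, mul_assoc]
      _ = a⁻¹ * z * a⁻¹ * c ^ 2 := by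
        simp only [hca, mul_inv_rev, inv_eq_self_of_sq_eq_one hz, mul_assoc]
  have a_inv_sq : a⁻¹ ^ 2 = c ^ 2 * z * a ^ 2 * z * c ^ 2 := by
    rw [inv_pow, inv_eq_iff_mul_eq_one, ← hac, mul_sq]
    simp only [mul_assoc]
  have c_sq_inv : (c ^ 2)⁻¹ = c ^ 2 := inv_eq_self_of_sq_eq_one (by rw [← pow_mul, hc])
  calc a⁻¹ ^ 2 * c ^ 2 * (a * z * a⁻¹) * (a⁻¹ * c) ^ 2
      = c ^ 2 * (z * a ^ 2 * z * c ^ 4 * a * z * (a ^ 2)⁻¹ * z * a⁻¹) * c ^ 2 := by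
        rw [a_inv_sq, inv_mul_sq]
        group
    _ = c ^ 2 * (conjByPow a z 0 * conjByPow a z 2 * (conjByPow a z 3 * conjByPow a z 1)) *
          (c ^ 2)⁻¹ := by
        rw [hc, c_sq_inv]
        simp only [conjByPow]
        group

end Group

theorem Ua_pow_four_eq_one : Ua ^ 4 = 1 :=
  PresentedGroup.one_of_mem (rels := Urels) (by simp [Urels])

theorem Ub_sq_sq_eq_one : (Ub ^ 2) ^ 2 = 1 := by
  rw [← pow_mul]
  exact PresentedGroup.one_of_mem (rels := Urels) (by simp [Urels])

theorem Uc_pow_four_eq_one : Uc ^ 4 = 1 :=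
  PresentedGroup.one_of_mem (rels := Urels) (by simp [Urels])

theorem Ua_mul_Ub_sq_eq_one : (Ua * Ub) ^ 2 = 1 :=
  PresentedGroup.one_of_mem (rels := Urels) (by simp [Urels])

theorem Ua_sq_mul_Ub_sq_pow_four_eq_one : (Ua ^ 2 * Ub ^ 2) ^ 4 = 1 :=
  PresentedGroup.one_of_mem (rels := Urels) (by simp [Urels])

theorem Ua_sq_mul_Uc_sq_mul_Ub_sq_mul_sq_eq_one : Ua ^ 2 * Uc ^ 2 * Ub ^ 2 * (Ua * Uc) ^ 2 = 1 :=
  PresentedGroup.one_of_mem (rels := Urels) (by simp [Urels])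

theorem Ua_inv_mul_Uc_conj_Ua_mul_Ub_sq_eq_one : Ua⁻¹ * Uc * Ua * Uc⁻¹ * Ub ^ 2 = 1 :=
  PresentedGroup.one_of_mem (rels := Urels) (by simp [Urels])

theorem Uc_conj_Ua : Uc * Ua * Uc⁻¹ = Ua * Ub ^ 2 := by
  have h : Ua⁻¹ * (Uc * Ua * Uc⁻¹) = (Ub ^ 2)⁻¹ :=
    eq_inv_of_mul_eq_one_left
      (by simpa only [mul_assoc] using Ua_inv_mul_Uc_conj_Ua_mul_Ub_sq_eq_one)
  rw [← inv_eq_self_of_sq_eq_one Ub_sq_sq_eq_one, ← h, mul_inv_cancel_left]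

theorem Ua_sq_mul_Ub_sq_eq_conj : (Ua ^ 2 * Ub) ^ 2 = Ua * Ub ^ 2 * Ua⁻¹ := by
  have h : Ua * Ub = Ub⁻¹ * Ua⁻¹ := by
    rw [← mul_inv_rev, inv_eq_self_of_sq_eq_one Ua_mul_Ub_sq_eq_one]
  calc (Ua ^ 2 * Ub) ^ 2 = Ua * (Ua * Ub) * Ua * (Ua * Ub) := by simp only [sq, mul_assoc]
    _ = Ua * Ub⁻¹ * Ub⁻¹ * Ua⁻¹ := by rw [h]; group
    _ = Ua * (Ub ^ 2)⁻¹ * Ua⁻¹ := by group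
    _ = Ua * Ub ^ 2 * Ua⁻¹ := by rw [inv_eq_self_of_sq_eq_one Ub_sq_sq_eq_one]

theorem Ub_sq_mul_Ua_pow_four_eq_one : (Ub ^ 2 * Ua) ^ 4 = 1 := by
  rw [pow_mul_comm_eq_one_iff, ← Uc_conj_Ua, conj_pow, Ua_pow_four_eq_one, mul_one,
    mul_inv_cancel]

theorem Ub_sq_mul_Ua_sq_pow_four_eq_one : (Ub ^ 2 * Ua ^ 2) ^ 4 = 1 := by
  rw [pow_mul_comm_eq_one_iff, Ua_sq_mul_Ub_sq_pow_four_eq_one]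

/-- The word `a⁻²c²(a²b)²(a⁻¹c)²`, whose image generates the centre of `G_1`. -/
def Uw : UGroup := Ua⁻¹ ^ 2 * Uc ^ 2 * (Ua ^ 2 * Ub) ^ 2 * (Ua⁻¹ * Uc) ^ 2

theorem Uw_eq_conj_prod_conjByPow :
    Uw = Uc ^ 2 * (conjByPow Ua (Ub ^ 2) 0 * conjByPow Ua (Ub ^ 2) 2 *
      (conjByPow Ua (Ub ^ 2) 3 * conjByPow Ua (Ub ^ 2) 1)) * (Uc ^ 2)⁻¹ := by
  rw [Uw, Ua_sq_mul_Ub_sq_eq_conj]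
  exact word_eq_conj_prod_conjByPow Uc_pow_four_eq_one Ub_sq_sq_eq_one Uc_conj_Ua
    Ua_sq_mul_Uc_sq_mul_Ub_sq_mul_sq_eq_one

theorem Uw_sq_eq_one : Uw ^ 2 = 1 := by
  have h := prod_conjByPow_sq_eq_one Ua_pow_four_eq_one Ub_sq_sq_eq_one Ub_sq_mul_Ua_pow_four_eq_one
    Ub_sq_mul_Ua_sq_pow_four_eq_one
  rw [Uw_eq_conj_prod_conjByPow, conj_pow, h, mul_one, mul_inv_cancel]

/-- The space `𝔽₂⁶`, on which `U` acts by the permutations `permA`, `permB`, `permC`. Its points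
stand for the cosets in `G_1`, a group of order `2 ^ 10`, of a subgroup of order `2 ^ 4` that does
not contain the image of `Uw`; the coordinates are chosen to make the action quadratic. -/
abbrev CosetSpace : Type := ZMod 2 × ZMod 2 × ZMod 2 × ZMod 2 × ZMod 2 × ZMod 2

/-- The action of `a` on `CosetSpace`. -/
def permA : Equiv.Perm CosetSpace where
  toFun := fun (x, y, z, u, v, t) => (x + 1, y + x + 1, z, u + y, v, t + (x + u) * y)
  invFun := fun (x, y, z, u, v, t) => (x + 1, y + x, z, u + y + x, v, t + (u + y + 1) * (y + x))
  left_inv := by decide +kernel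
  right_inv := by decide +kernel

/-- The action of `b` on `CosetSpace`. -/
def permB : Equiv.Perm CosetSpace where
  toFun := fun (x, y, z, u, v, t) => (x + 1, y + x, z + x, u, v, t + u)
  invFun := fun (x, y, z, u, v, t) => (x + 1, y + x + 1, z + x + 1, u, v, t + u)
  left_inv := by decide +kernel
  right_inv := by decide +kernel

/-- The action of `c` on `CosetSpace`. -/
def permC : Equiv.Perm CosetSpace where
  toFun := fun (x, y, z, u, v, t) =>
    (x, y + x, z + x, u + y, v + z, t + y * u + (z + 1) * v)
  invFun := fun (x, y, z, u, v, t) =>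
    (x, y + x, z + x, u + y + x, v + z + x,
      t + (y + x) * (u + y + x) + (z + x + 1) * (v + z + x))
  left_inv := by decide +kernel
  right_inv := by decide +kernel

theorem lift_perm_eq_one_of_mem_Urels :
    ∀ r ∈ Urels, FreeGroup.lift ![permA, permB, permC] r = 1 := by
  simp only [Urels, Set.mem_insert_iff, Set.mem_singleton_iff, forall_eq_or_imp, forall_eq,
    map_mul, map_pow, map_inv, FreeGroup.lift_apply_of]
  refine ⟨?_, ?_, ?_, ?_, ?_, ?_, ?_, ?_, ?_⟩ <;>
    exact Equiv.ext (by decide +kernel)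

/-- The permutation representation of `U` on `CosetSpace`. -/
def cosetRep : UGroup →* Equiv.Perm CosetSpace :=
  PresentedGroup.toGroup lift_perm_eq_one_of_mem_Urels

theorem cosetRep_Ua : cosetRep Ua = permA :=
  PresentedGroup.toGroup.of _

theorem cosetRep_Ub : cosetRep Ub = permB :=
  PresentedGroup.toGroup.of _

theorem cosetRep_Uc : cosetRep Uc = permC :=
  PresentedGroup.toGroup.of _

theorem cosetRep_Ux : cosetRep Ux = 1 := by
  rw [Ux, map_pow, map_mul, map_inv, cosetRep_Ua, cosetRep_Uc]
  exact Equiv.ext (by decide +kernel)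

theorem cosetRep_Uy : cosetRep Uy = 1 := by
  rw [Uy, map_pow, map_mul, map_inv, cosetRep_Ua, cosetRep_Uc]
  exact Equiv.ext (by decide +kernel)

theorem cosetRep_Uw : cosetRep Uw = Equiv.addRight (0, 0, 0, 0, 0, 1) := by
  simp only [Uw, map_mul, map_pow, map_inv, cosetRep_Ua, cosetRep_Ub, cosetRep_Uc]
  exact Equiv.ext (by decide +kernel)

theorem normalClosure_le_ker_cosetRep : Subgroup.normalClosure {Ux, Uy} ≤ cosetRep.ker :=
  Subgroup.normalClosure_le_normal (by
    simp [Set.insert_subset_iff, MonoidHom.mem_ker, cosetRep_Ux, cosetRep_Uy])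

theorem Uw_notMem_normalClosure : Uw ∉ Subgroup.normalClosure {Ux, Uy} := by
  intro hw
  have h : cosetRep Uw = 1 := normalClosure_le_ker_cosetRep hw
  rw [cosetRep_Uw] at h
  exact absurd (Equiv.congr_fun h 0) (by decide)

theorem image_order_two_general {N : Subgroup UGroup} [N.Normal]
    (hN : N ≤ Subgroup.normalClosure {Ux, Uy}) : orderOf (QuotientGroup.mk Uw : UGroup ⧸ N) = 2 :=
  orderOf_eq_prime (by rw [← QuotientGroup.mk_pow, Uw_sq_eq_one, QuotientGroup.mk_one])
    fun h => Uw_notMem_normalClosure (hN ((QuotientGroup.eq_one_iff Uw).mp h))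

/-- In `G_1 = U / N_1` with `N_1 = ⟨x, y⟩`, the image of `a⁻² c² (a² b)² (a⁻¹ c)²`
has order `2`; in particular it is non-trivial. -/
theorem image_order_two
    (hnorm : (Subgroup.closure {Ux, Uy} : Subgroup UGroup).Normal) :
    haveI := hnorm
    orderOf (QuotientGroup.mk (Ua⁻¹ ^ 2 * Uc ^ 2 * (Ua ^ 2 * Ub) ^ 2 * (Ua⁻¹ * Uc) ^ 2) :
        UGroup ⧸ (Subgroup.closure {Ux, Uy} : Subgroup UGroup)) = 2 ∧
    (QuotientGroup.mk (Ua⁻¹ ^ 2 * Uc ^ 2 * (Ua ^ 2 * Ub) ^ 2 * (Ua⁻¹ * Uc) ^ 2) :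
        UGroup ⧸ (Subgroup.closure {Ux, Uy} : Subgroup UGroup)) ≠ 1 := by
  have h : orderOf (QuotientGroup.mk Uw : UGroup ⧸ Subgroup.closure {Ux, Uy}) = 2 :=
    image_order_two_general Subgroup.closure_le_normalClosure
  exact ⟨h, fun h_one => absurd (h.symm.trans (orderOf_eq_one_iff.mpr h_one)) (by decide)⟩
end
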